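/- arXiv:2401.01302 — 12 statements merged into one kernel-verified Lean document; each statement's English description precedes it below -/
import Mathlib

section
/- Let K be a field and n ≤ r. Let (A_1,A_2,A_3) be n×n matrices over K such that (i) the three subspaces Im [A_1,A_2], Im [A_1,A_3], Im [A_2,A_3] each have dimension 2(r−n), and (ii) the three subspaces Im [A_1,A_2]+Im [A_1,A_3], Im [A_2,A_1]+Im [A_2,A_3], Im [A_3,A_1]+Im [A_3,A_2] each have dimension 3(r−n). If (Z_1,Z_2,Z_3) and (Z'_1,Z'_2,Z'_3) are two commuting extensions of (A_1,A_2,A_3) of size r, then there exists an invertible matrix M ∈ GL_{r−n}(K) such that Z'_i = ρ_M(Z_i) for i = 1,2,3. -/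
/-!
Write `Z i` in blocks `A i, B i, C i, D i`. The upper-left block of `Z i * Z j = Z j * Z i` says
`[A i, A j] = B j * C i - B i * C j`. By hypothesis (i) this has the largest rank the right-hand
side allows, so the stacked matrix of `C i` and `C j` has a right inverse for `i ≠ j`
(`exists_right_inverse_pair`); by hypothesis (ii) `[B 0, B 1, B 2]` has a left inverse
(`exists_dual`), i.e. there are `L i` with `L i * B j = δ i j`.

Given a second extension with blocks `B', C', D'` and dual matrices `L i` for `B'`, multiply
`B j * C i - B i * C j = B' j * C' i - B' i * C' j` on the left by `L k`. For `k ∉ {i, j}` this gives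
`L k * B j = 0` for `k ≠ j`; for `k = j` it gives `C' i = (L j * B j) * C i`. Each `C i` is right
invertible, so `N = L j * B j` does not depend on `j`, whence `C' i = N * C i` and
`B i = B' i * N` with `N` invertible. Finally the upper-right block of the commutation relation
determines `D` from `A` and `B`, so that `D' i = N * D i * N⁻¹`, and `M = N⁻¹` conjugates one
extension into the other.
-/

open Matrix

theorem exists_right_inverse_of_rank {K m l : Type*} [Field K] [Fintype m] [Fintype l]
    [DecidableEq m] (Q : Matrix m l K) (h : Fintype.card m ≤ Q.rank) :
    ∃ R : Matrix l m K, Q * R = 1 := by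
  classical
  rw [← Matrix.mulVec_surjective_iff_exists_right_inverse]
  have h1 : LinearMap.range Q.mulVecLin = ⊤ := by
    apply Submodule.eq_top_of_finrank_eq
    rw [Module.finrank_pi]
    exact le_antisymm (Matrix.rank_le_card_height Q) h
  exact LinearMap.range_eq_top.mp h1

theorem exists_left_inverse_of_rank {K m l : Type*} [Field K] [Fintype m] [Fintype l]
    [DecidableEq m] (P : Matrix l m K) (h : Fintype.card m ≤ P.rank) :
    ∃ L : Matrix m l K, L * P = 1 := by
  obtain ⟨R, hR⟩ := exists_right_inverse_of_rank Pᵀ (by rwa [Matrix.rank_transpose])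
  refine ⟨Rᵀ, ?_⟩
  rw [← Matrix.transpose_inj]
  simpa using hR

/-- If `B₁ * C₀ - B₀ * C₁` has the maximal rank `2 * s`, the stacked matrix of `C₀` and `C₁` has a
right inverse, whose two column blocks are `R` and `S`. -/
theorem exists_right_inverse_pair {K : Type*} [Field K] {n s : ℕ} (X : Matrix (Fin n) (Fin n) K)
    (B₀ B₁ : Matrix (Fin n) (Fin s) K) (C₀ C₁ : Matrix (Fin s) (Fin n) K)
    (hX : X = B₁ * C₀ - B₀ * C₁) (h : X.rank = 2 * s) :
    ∃ R S : Matrix (Fin n) (Fin s) K, C₀ * R = 1 ∧ C₁ * R = 0 ∧ C₀ * S = 0 ∧ C₁ * S = 1 := by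
  have hfac : X = Matrix.fromCols B₁ (-B₀) * Matrix.fromRows C₀ C₁ := by
    rw [Matrix.fromCols_mul_fromRows, hX, Matrix.neg_mul, sub_eq_add_neg]
  have hr : Fintype.card (Fin s ⊕ Fin s) ≤ (Matrix.fromRows C₀ C₁).rank := by
    have := Matrix.rank_mul_le_right (Matrix.fromCols B₁ (-B₀)) (Matrix.fromRows C₀ C₁)
    rw [← hfac, h] at this
    simpa [two_mul] using this
  obtain ⟨R, hR⟩ := exists_right_inverse_of_rank _ hr
  rw [← Matrix.fromCols_toCols R, Matrix.fromRows_mul_fromCols, ← Matrix.fromBlocks_one,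
    Matrix.fromBlocks_inj] at hR
  exact ⟨R.toCols₁, R.toCols₂, hR.1, hR.2.2.1, hR.2.1, hR.2.2.2⟩

/-- If the images of two commutators together span a space of the maximal dimension `3 * s`, then
the columns of `B 0, B 1, B 2` are jointly independent, and a dual family exists. -/
theorem exists_dual {K : Type*} [Field K] {n s : ℕ} (X Y : Matrix (Fin n) (Fin n) K)
    (B : Fin 3 → Matrix (Fin n) (Fin s) K) (C : Fin 3 → Matrix (Fin s) (Fin n) K)
    (hX : X = B 1 * C 0 - B 0 * C 1) (hY : Y = B 2 * C 0 - B 0 * C 2)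
    (h : Module.finrank K ↥(LinearMap.range X.mulVecLin ⊔ LinearMap.range Y.mulVecLin) = 3 * s) :
    ∃ L : Fin 3 → Matrix (Fin s) (Fin n) K, (∀ i, L i * B i = 1) ∧
      ∀ i j, i ≠ j → L i * B j = 0 := by
  -- `P` is `[B 0, B 1, B 2]`, its columns indexed by the block number and the column in the block.
  set P : Matrix (Fin n) (Fin 3 × Fin s) K := Matrix.of fun a p => B p.1 a p.2 with hP
  have hB : ∀ j, B j = P * (1 : Matrix (Fin 3 × Fin s) (Fin 3 × Fin s) K).submatrix id
      (fun c => (j, c)) := by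
    intro j
    ext a c
    simp [Matrix.mul_apply, Matrix.one_apply, hP]
  have hrange : ∀ (W : Matrix (Fin n) (Fin n) K) (j k : Fin 3), W = B j * C 0 - B 0 * C k →
      LinearMap.range W.mulVecLin ≤ LinearMap.range P.mulVecLin := by
    intro W j k hW
    rw [hB j, hB 0, Matrix.mul_assoc, Matrix.mul_assoc, ← Matrix.mul_sub] at hW
    rw [hW, Matrix.mulVecLin_mul]
    exact LinearMap.range_comp_le_range _ _
  have hr : Fintype.card (Fin 3 × Fin s) ≤ P.rank := by
    have h1 := Submodule.finrank_mono (sup_le (hrange X 1 1 hX) (hrange Y 2 2 hY))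
    rw [h] at h1
    simpa [Matrix.rank] using h1
  obtain ⟨L, hL⟩ := exists_left_inverse_of_rank P hr
  have key : ∀ i j b c, (Matrix.of (fun b a => L (i, b) a) * B j) b c =
      (1 : Matrix (Fin 3 × Fin s) (Fin 3 × Fin s) K) (i, b) (j, c) := by
    intro i j b c
    rw [← hL]
    rfl
  refine ⟨fun i => Matrix.of fun b a => L (i, b) a, fun i => ?_, fun i j hij => ?_⟩
  · ext b c
    rw [key, Matrix.one_apply, Matrix.one_apply]
    simp
  · ext b c
    rw [key, Matrix.one_apply]
    simp [hij]

/-- The upper-left and upper-right blocks of the commutation relation. -/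
theorem block_relations {K : Type*} [Field K] {n s : ℕ}
    {A₀ A₁ : Matrix (Fin n) (Fin n) K} {B₀ B₁ : Matrix (Fin n) (Fin s) K}
    {C₀ C₁ : Matrix (Fin s) (Fin n) K} {D₀ D₁ : Matrix (Fin s) (Fin s) K}
    (h : Matrix.fromBlocks A₀ B₀ C₀ D₀ * Matrix.fromBlocks A₁ B₁ C₁ D₁ =
      Matrix.fromBlocks A₁ B₁ C₁ D₁ * Matrix.fromBlocks A₀ B₀ C₀ D₀) :
    A₀ * A₁ - A₁ * A₀ = B₁ * C₀ - B₀ * C₁ ∧ A₀ * B₁ + B₀ * D₁ = A₁ * B₀ + B₁ * D₀ := by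
  rw [Matrix.fromBlocks_multiply, Matrix.fromBlocks_multiply, Matrix.fromBlocks_inj] at h
  refine ⟨?_, h.2.1⟩
  rw [sub_eq_sub_iff_add_eq_add, h.1, add_comm]

/-- (Theorem 1.1, essential uniqueness.) Under the rank hypotheses (i)
and (ii) on the commutators of `(A_1,A_2,A_3)`, any two commuting extensions
`(Z_1,Z_2,Z_3)` and `(Z'_1,Z'_2,Z'_3)` of size `r` are conjugate by the `GL_{r−n}` action
`ρ_M`. -/
theorem commutingExtension_essentially_unique
    (K : Type*) [Field K] (n r : ℕ) (hnr : n ≤ r)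
    (A : Fin 3 → Matrix (Fin n) (Fin n) K)
    -- hypothesis (i)
    (hi12 : Module.finrank K
      ↥(LinearMap.range (A 0 * A 1 - A 1 * A 0).mulVecLin) = 2 * (r - n))
    (hi13 : Module.finrank K
      ↥(LinearMap.range (A 0 * A 2 - A 2 * A 0).mulVecLin) = 2 * (r - n))
    (hi23 : Module.finrank K
      ↥(LinearMap.range (A 1 * A 2 - A 2 * A 1).mulVecLin) = 2 * (r - n))
    -- hypothesis (ii)
    (hii1 : Module.finrank K ↥(LinearMap.range (A 0 * A 1 - A 1 * A 0).mulVecLin ⊔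
      LinearMap.range (A 0 * A 2 - A 2 * A 0).mulVecLin) = 3 * (r - n))
    (hii2 : Module.finrank K ↥(LinearMap.range (A 1 * A 0 - A 0 * A 1).mulVecLin ⊔
      LinearMap.range (A 1 * A 2 - A 2 * A 1).mulVecLin) = 3 * (r - n))
    (hii3 : Module.finrank K ↥(LinearMap.range (A 2 * A 0 - A 0 * A 2).mulVecLin ⊔
      LinearMap.range (A 2 * A 1 - A 1 * A 2).mulVecLin) = 3 * (r - n))
    -- two commuting extensions of size r
    (Z Z' : Fin 3 → Matrix (Fin n ⊕ Fin (r - n)) (Fin n ⊕ Fin (r - n)) K)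
    (hZcomm : ∀ i j, Z i * Z j = Z j * Z i)
    (hZblock : ∀ i, ∃ (B : Matrix (Fin n) (Fin (r - n)) K)
        (C : Matrix (Fin (r - n)) (Fin n) K) (D : Matrix (Fin (r - n)) (Fin (r - n)) K),
        Z i = Matrix.fromBlocks (A i) B C D)
    (hZ'comm : ∀ i j, Z' i * Z' j = Z' j * Z' i)
    (hZ'block : ∀ i, ∃ (B : Matrix (Fin n) (Fin (r - n)) K)
        (C : Matrix (Fin (r - n)) (Fin n) K) (D : Matrix (Fin (r - n)) (Fin (r - n)) K),
        Z' i = Matrix.fromBlocks (A i) B C D) :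
    ∃ M : GL (Fin (r - n)) K, ∀ i,
      Z' i = Matrix.fromBlocks (1 : Matrix (Fin n) (Fin n) K) 0 0
          (↑(M⁻¹) : Matrix (Fin (r - n)) (Fin (r - n)) K) * Z i *
        Matrix.fromBlocks (1 : Matrix (Fin n) (Fin n) K) 0 0
          (↑M : Matrix (Fin (r - n)) (Fin (r - n)) K) := by
  generalize r - n = s at *
  choose B C D hZ using hZblock
  choose B' C' D' hZ' using hZ'block
  have hrel : ∀ i j, A i * A j - A j * A i = B j * C i - B i * C j ∧
      A i * B j + B i * D j = A j * B i + B j * D i := fun i j =>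
    block_relations (by rw [← hZ, ← hZ, hZcomm])
  have hrel' : ∀ i j, A i * A j - A j * A i = B' j * C' i - B' i * C' j ∧
      A i * B' j + B' i * D' j = A j * B' i + B' j * D' i := fun i j =>
    block_relations (by rw [← hZ', ← hZ', hZ'comm])
  have hrank : ∀ i j, i ≠ j → (A i * A j - A j * A i).rank = 2 * s := by
    have hswap : ∀ i j, (A i * A j - A j * A i).rank = (A j * A i - A i * A j).rank := by
      intro i j
      have hneg : (-(A j * A i - A i * A j)).mulVecLin = -(A j * A i - A i * A j).mulVecLin := by
        ext1 v
        simp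
      rw [← neg_sub (A j * A i) (A i * A j), Matrix.rank, Matrix.rank, hneg, LinearMap.range_neg]
    intro i j hij
    fin_cases i <;> fin_cases j <;>
      first
      | exact absurd rfl hij
      | exact hi12
      | exact hi13
      | exact hi23
      | exact (hswap _ _).trans hi12
      | exact (hswap _ _).trans hi13
      | exact (hswap _ _).trans hi23
  have hinv : ∀ i j, i ≠ j → ∃ R S : Matrix (Fin n) (Fin s) K,
      C i * R = 1 ∧ C j * R = 0 ∧ C i * S = 0 ∧ C j * S = 1 := fun i j hij =>
    exists_right_inverse_pair _ _ _ _ _ (hrel i j).1 (hrank i j hij)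
  obtain ⟨L, hL1, hL0⟩ := exists_dual _ _ B' C' (hrel' 0 1).1 (hrel' 0 2).1 hii1
  have hBC : ∀ i j, B j * C i - B i * C j = B' j * C' i - B' i * C' j := fun i j =>
    (hrel i j).1.symm.trans (hrel' i j).1
  have third : ∀ i j : Fin 3, i ≠ j → ∃ k, k ≠ i ∧ k ≠ j := by decide
  have hLB : ∀ k j, k ≠ j → L k * B j = 0 := by
    intro k j hkj
    obtain ⟨i, hik, hij⟩ := third k j hkj
    obtain ⟨R, -, hR1, hR2, -, -⟩ := hinv i j hij
    have h := congrArg (fun X => L k * X * R) (hBC i j)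
    simp only [Matrix.mul_sub, ← Matrix.mul_assoc, hL0 k i hik.symm, hL0 k j hkj] at h
    simpa [Matrix.sub_mul, Matrix.mul_assoc, hR1, hR2] using h
  have hC : ∀ i j, i ≠ j → C' i = L j * B j * C i := by
    intro i j hij
    have h := congrArg (fun X => L j * X) (hBC i j)
    simpa [Matrix.mul_sub, ← Matrix.mul_assoc, hL1, hL0 j i hij.symm, hLB j i hij.symm] using h.symm
  -- `L j * B j` is the same matrix for all `j`: compare two of them through the third `C i`.
  have hNeq : ∀ j k, L j * B j = L k * B k := by
    intro j k
    rcases eq_or_ne j k with rfl | hjk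
    · rfl
    obtain ⟨i, hij, hik⟩ := third j k hjk
    obtain ⟨R, -, hR1, -⟩ := hinv i j hij
    have h := congrArg (fun X => X * R) ((hC i j hij).symm.trans (hC i k hik))
    simpa [Matrix.mul_assoc, hR1] using h
  obtain ⟨N, hN⟩ : ∃ N, N = L 0 * B 0 := ⟨_, rfl⟩
  have hLN : ∀ j, L j * B j = N := fun j => (hNeq j 0).trans hN.symm
  have other : ∀ i : Fin 3, ∃ j, i ≠ j := by decide
  have hCN : ∀ i, C' i = N * C i := by
    intro i
    obtain ⟨j, hij⟩ := other i
    rw [hC i j hij, hLN]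
  have hBN : ∀ i, B i = B' i * N := by
    intro i
    obtain ⟨j, hij⟩ := other i
    obtain ⟨R, S, hR1, hR2, hS1, hS2⟩ := hinv i j hij
    have h := congrArg (fun X => X * S) (hBC i j)
    simpa [Matrix.sub_mul, Matrix.mul_assoc, hCN, hS1, hS2] using h
  obtain ⟨M, hNM⟩ : ∃ M, N * M = 1 := by
    obtain ⟨R, -, hR, -⟩ := exists_right_inverse_pair _ _ _ _ _ (hrel' 0 1).1
      (hrank 0 1 (by decide))
    exact ⟨C 0 * R, by rw [← Matrix.mul_assoc, ← hCN, hR]⟩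
  have hMN : M * N = 1 := mul_eq_one_comm.mp hNM
  have hB' : ∀ i, B' i = B i * M := fun i => by
    rw [hBN, Matrix.mul_assoc, hNM, Matrix.mul_one]
  have hD : ∀ j, D' j = N * D j * M := by
    intro j
    obtain ⟨i, hji⟩ := other j
    -- `L i` isolates `D' j`, resp. `N * D j`, in the upper-right block of the commutation relation.
    have h' := congrArg (fun X => L i * X) (hrel' i j).2
    have h := congrArg (fun X => L i * X * M) (hrel i j).2
    simp only [Matrix.mul_add, Matrix.add_mul, ← Matrix.mul_assoc, hL1, hL0 i j hji.symm,
      hLN, hLB i j hji.symm, Matrix.one_mul, Matrix.zero_mul, add_zero] at h h'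
    rw [hB' i, hB' j, ← Matrix.mul_assoc, ← Matrix.mul_assoc, ← h] at h'
    exact add_left_cancel h'
  refine ⟨⟨M, N, hMN, hNM⟩, fun i => ?_⟩
  change Z' i = Matrix.fromBlocks 1 0 0 N * Z i * Matrix.fromBlocks 1 0 0 M
  rw [hZ, hZ', Matrix.fromBlocks_multiply, Matrix.fromBlocks_multiply]
  simp [hCN, hB', hD]
end

section
/- Let K be a field and n ≤ r. Let (A_1,A_2,A_3) be n×n matrices over K such that (i) the three subspaces Im [A_1,A_2], Im [A_1,A_3], Im [A_2,A_3] each have dimension 2(r−n), and (ii) the three subspaces Im [A_1,A_2]+Im [A_1,A_3], Im [A_2,A_1]+Im [A_2,A_3], Im [A_3,A_1]+Im [A_3,A_2] each have dimension 3(r−n). Then for every s with n ≤ s < r, the tuple (A_1,A_2,A_3) has no commuting extension of size s. -/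
/-! If `Z 0` and `Z 1` commute, comparing upper left blocks gives
`A 0 * A 1 - A 1 * A 0 = B₁ * C₀ - B₀ * C₁`, where the `Bᵢ` have only `s - n` columns.
Hence the commutator has rank at most `2 * (s - n)`, which is less than `2 * (r - n)`. -/

open Matrix

/-- (Theorem 1.1, minimality.) Under the rank hypotheses (i) and (ii) on
the commutators of `(A_1,A_2,A_3)`, the tuple has no commuting extension of any size `s`
with `n ≤ s < r`. -/
theorem no_commutingExtension_of_smaller_size
    (K : Type*) [Field K] (n r : ℕ) (hnr : n ≤ r)
    (A : Fin 3 → Matrix (Fin n) (Fin n) K)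
    -- hypothesis (i)
    (hi12 : Module.finrank K
      ↥(LinearMap.range (A 0 * A 1 - A 1 * A 0).mulVecLin) = 2 * (r - n))
    (hi13 : Module.finrank K
      ↥(LinearMap.range (A 0 * A 2 - A 2 * A 0).mulVecLin) = 2 * (r - n))
    (hi23 : Module.finrank K
      ↥(LinearMap.range (A 1 * A 2 - A 2 * A 1).mulVecLin) = 2 * (r - n))
    -- hypothesis (ii)
    (hii1 : Module.finrank K ↥(LinearMap.range (A 0 * A 1 - A 1 * A 0).mulVecLin ⊔
      LinearMap.range (A 0 * A 2 - A 2 * A 0).mulVecLin) = 3 * (r - n))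
    (hii2 : Module.finrank K ↥(LinearMap.range (A 1 * A 0 - A 0 * A 1).mulVecLin ⊔
      LinearMap.range (A 1 * A 2 - A 2 * A 1).mulVecLin) = 3 * (r - n))
    (hii3 : Module.finrank K ↥(LinearMap.range (A 2 * A 0 - A 0 * A 2).mulVecLin ⊔
      LinearMap.range (A 2 * A 1 - A 1 * A 2).mulVecLin) = 3 * (r - n)) :
    ∀ s : ℕ, n ≤ s → s < r →
      ¬ ∃ Z : Fin 3 → Matrix (Fin n ⊕ Fin (s - n)) (Fin n ⊕ Fin (s - n)) K,
        (∀ i j, Z i * Z j = Z j * Z i) ∧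
        (∀ i, ∃ (B : Matrix (Fin n) (Fin (s - n)) K)
            (C : Matrix (Fin (s - n)) (Fin n) K) (D : Matrix (Fin (s - n)) (Fin (s - n)) K),
            Z i = Matrix.fromBlocks (A i) B C D) := by
  rintro s hns hsr ⟨Z, hcomm, hZ⟩
  obtain ⟨B₀, C₀, D₀, h₀⟩ := hZ 0
  obtain ⟨B₁, C₁, D₁, h₁⟩ := hZ 1
  have h := hcomm 0 1
  rw [h₀, h₁, fromBlocks_multiply, fromBlocks_multiply, fromBlocks_inj] at h
  -- The upper left block of `Z 0 * Z 1 = Z 1 * Z 0` writes the commutator as a product with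
  -- inner dimension `(s - n) + (s - n)`.
  have key : A 0 * A 1 - A 1 * A 0 = fromCols B₁ B₀ * fromRows C₀ (-C₁) := by
    rw [fromCols_mul_fromRows, Matrix.mul_neg, ← sub_eq_add_neg, sub_eq_sub_iff_add_eq_add, h.1,
      add_comm]
  have hrank : (A 0 * A 1 - A 1 * A 0).rank ≤ (s - n) + (s - n) := by
    rw [key]
    refine (rank_mul_le_left _ _).trans ((rank_le_card_width _).trans ?_)
    simp
  rw [Matrix.rank, hi12] at hrank
  omega
end

section
/- Let K be a field, L a field extension of K, and n ≤ r. Let (A_1,A_2,A_3) be n×n matrices over K such that (i) the three subspaces Im [A_1,A_2], Im [A_1,A_3], Im [A_2,A_3] each have dimension 2(r−n), and (ii) the three subspaces Im [A_1,A_2]+Im [A_1,A_3], Im [A_2,A_1]+Im [A_2,A_3], Im [A_3,A_1]+Im [A_3,A_2] each have dimension 3(r−n). If the tuple of matrices obtained by applying the embedding K → L entrywise to (A_1,A_2,A_3) admits a commuting extension of size r over L, then (A_1,A_2,A_3) admits a commuting extension of size r over K. -/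
open Matrix

/-! The off-diagonal blocks of a commuting extension over `L` satisfy
`[A_i, A_j] = B_j C_i - B_i C_j`. Write `m = r - n`. The rank hypotheses force the columns of
`B_0, B_1, B_2` to be linearly independent (`exists_dual`) and each `C_i` to have full row rank
(`exists_rightInverse`). Hence `Im B_i = Im [A_i, A_j] ∩ Im [A_i, A_k]` has a basis over `K`, i.e.
`B_i a_i` is defined over `K` for some `a_i ∈ GL_m(L)` (`exists_rational_frame`). The commutator
identity then shows that `a_i⁻¹ C_k` is defined over `K` for `i ≠ k`. Comparing `a_0⁻¹ C_k` with
`a_i⁻¹ C_k`, where `C_k` has full row rank, shows that `a_i⁻¹ a_0` is defined over `K`.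
So after conjugating the extension by `diag(1, a_0)` all `B_i` are defined over `K`, and the
remaining blocks are determined by them: `C_i` and `D_i` are the unique solutions of the linear
systems `[A_i, A_j] = B_j C_i - B_i C_j` and `A_i B_j - A_j B_i = B_j D_i - B_i D_j`, whose
coefficients lie in `K`. Unique solvability descends the solutions to `K`
(`IsRational.of_mul_eq`), by applying a `K`-linear retraction `L → K` entrywise. -/

/-! ### Matrices defined over the ground field -/

section Rational

variable {K L : Type*} [Field K] [Field L] [Algebra K L]

variable (K) in
/-- A matrix over `L` is rational over `K` if it comes from a matrix over `K`. -/
def IsRational {ι κ : Type*} (X : Matrix ι κ L) : Prop :=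
  ∃ Y : Matrix ι κ K, X = Y.map (algebraMap K L)

variable {ι κ l ν : Type*}

theorem IsRational.map (Y : Matrix ι κ K) : IsRational K (Y.map (algebraMap K L)) := ⟨Y, rfl⟩

theorem IsRational.mul [Fintype κ] {X : Matrix ι κ L} {Y : Matrix κ l L}
    (hX : IsRational K X) (hY : IsRational K Y) : IsRational K (X * Y) := by
  obtain ⟨X, rfl⟩ := hX
  obtain ⟨Y, rfl⟩ := hY
  exact ⟨X * Y, by rw [Matrix.map_mul]⟩

theorem IsRational.sub {X Y : Matrix ι κ L}
    (hX : IsRational K X) (hY : IsRational K Y) : IsRational K (X - Y) := by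
  obtain ⟨X, rfl⟩ := hX
  obtain ⟨Y, rfl⟩ := hY
  exact ⟨X - Y, by ext; simp⟩

theorem IsRational.transpose {X : Matrix ι κ L} (hX : IsRational K X) : IsRational K Xᵀ := by
  obtain ⟨X, rfl⟩ := hX
  exact ⟨Xᵀ, by rw [Matrix.transpose_map]⟩

/-- The unique solution of a linear system with coefficients in `K` is defined over `K`. -/
theorem IsRational.of_mul_eq [Fintype κ] [Fintype ι] [DecidableEq κ] {M : Matrix ι κ L}
    {N : Matrix ι l L} {X : Matrix κ l L} {E : Matrix κ ι L} (hM : IsRational K M)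
    (hN : IsRational K N) (hE : E * M = 1) (h : M * X = N) : IsRational K X := by
  obtain ⟨M, rfl⟩ := hM
  obtain ⟨N, rfl⟩ := hN
  -- a `K`-linear retraction of the inclusion of `K` in `L`
  obtain ⟨φ, hφ⟩ := (Algebra.linearMap K L).exists_leftInverse_of_injective
    (LinearMap.ker_eq_bot.2 (algebraMap K L).injective)
  have hφ' : ∀ x : K, φ (algebraMap K L x) = x := fun x => LinearMap.congr_fun hφ x
  refine ⟨X.map φ, ?_⟩
  have key : M * X.map φ = N := by
    ext i j
    have := congrArg φ (congrFun (congrFun h i) j)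
    simp only [Matrix.mul_apply, Matrix.map_apply, map_sum, hφ', ← Algebra.smul_def,
      map_smul] at this
    simpa [Matrix.mul_apply] using this
  have h2 : M.map (algebraMap K L) * X
      = M.map (algebraMap K L) * (X.map φ).map (algebraMap K L) := by
    rw [h, ← Matrix.map_mul, key]
  have h3 := congrArg (E * ·) h2
  simpa only [← Matrix.mul_assoc, hE, Matrix.one_mul] using h3

theorem IsRational.of_mul_eq' [Fintype κ] [Fintype l] [DecidableEq κ] {M : Matrix κ l L}
    {N : Matrix ι l L} {X : Matrix ι κ L} {E : Matrix l κ L} (hM : IsRational K M)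
    (hN : IsRational K N) (hE : M * E = 1) (h : X * M = N) : IsRational K X := by
  have := IsRational.of_mul_eq (X := Xᵀ) (E := Eᵀ) hM.transpose hN.transpose
    (by rw [← Matrix.transpose_mul, hE, Matrix.transpose_one])
    (by rw [← Matrix.transpose_mul, h])
  simpa using this.transpose

/-- If the columns of `U` and `V` are jointly independent, witnessed by the dual system `E`, `F`,
then in a decomposition `N = U X - V Y` of a rational matrix the coefficient `X` is rational. -/
theorem IsRational.of_pair [Fintype κ] [Fintype ι] [DecidableEq κ] {U V : Matrix ι κ L}
    {N : Matrix ι l L} {X Y : Matrix κ l L} {E F : Matrix κ ι L} (hU : IsRational K U)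
    (hV : IsRational K V) (hN : IsRational K N) (hEU : E * U = 1) (hEV : E * V = 0)
    (hFU : F * U = 0) (hFV : F * V = 1) (h : N = U * X - V * Y) : IsRational K X := by
  have h1 : IsRational K (fromRows X (-Y)) := by
    refine IsRational.of_mul_eq (M := fromCols U V) (N := N) (E := fromRows E F) ?_ hN ?_ ?_
    · obtain ⟨U, rfl⟩ := hU
      obtain ⟨V, rfl⟩ := hV
      exact ⟨fromCols U V, by rw [fromCols_map]⟩
    · rw [fromRows_mul_fromCols, hEU, hEV, hFU, hFV, fromBlocks_one]
    · rw [fromCols_mul_fromRows, h, Matrix.mul_neg, sub_eq_add_neg]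
  obtain ⟨T, hT⟩ := h1
  refine ⟨T.toRows₁, ?_⟩
  ext i j
  simpa using congrFun (congrFun hT (Sum.inl i)) j

/-! ### Column spans and rank factorizations -/

/-- A subspace of `K ^ n` of the right dimension is the column span of a matrix with a left
inverse. -/
theorem exists_frame {n : ℕ} [Fintype κ] [DecidableEq κ] (V : Submodule K (Fin n → K))
    (hV : Module.finrank K V = Fintype.card κ) :
    ∃ (Q : Matrix (Fin n) κ K) (R : Matrix κ (Fin n) K), R * Q = 1 ∧
      ∀ j, (fun i => Q i j) ∈ V := by
  let b : Module.Basis κ K V := (Module.finBasisOfFinrankEq K V hV).reindex (Fintype.equivFin κ).symm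
  let f : (κ → K) →ₗ[K] (Fin n → K) := V.subtype ∘ₗ b.equivFun.symm.toLinearMap
  have hf : LinearMap.ker f = ⊥ := by
    rw [LinearMap.ker_eq_bot]
    exact V.injective_subtype.comp b.equivFun.symm.injective
  obtain ⟨g, hg⟩ := f.exists_leftInverse_of_injective hf
  refine ⟨LinearMap.toMatrix' f, LinearMap.toMatrix' g, ?_, fun j => ?_⟩
  · rw [← LinearMap.toMatrix'_comp, hg, LinearMap.toMatrix'_id]
  · have : (fun i => LinearMap.toMatrix' f i j) = f (Pi.single j 1) := by
      ext i
      rw [LinearMap.toMatrix'_apply]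
    rw [this]
    exact (b.equivFun.symm (Pi.single j 1)).2

theorem exists_eq_mul_of_mem_range [Fintype l] {Q : Matrix ι κ K} {M : Matrix ι l K}
    (h : ∀ j, (fun i => Q i j) ∈ LinearMap.range M.mulVecLin) : ∃ X : Matrix l κ K, Q = M * X := by
  choose x hx using h
  refine ⟨fun a j => x j a, ?_⟩
  ext i j
  exact (congrFun (hx j) i).symm

theorem exists_eq_mul_add_of_mem_sup [Fintype l] {Q : Matrix ι κ K} {M N : Matrix ι l K}
    (h : ∀ j, (fun i => Q i j) ∈ LinearMap.range M.mulVecLin ⊔ LinearMap.range N.mulVecLin) :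
    ∃ X Y : Matrix l κ K, Q = M * X + N * Y := by
  simp only [Submodule.mem_sup] at h
  choose y hy z hz hyz using h
  choose u hu using hy
  choose v hv using hz
  refine ⟨fun a j => u j a, fun a j => v j a, ?_⟩
  ext i j
  rw [← congrFun (hyz j) i, ← hu, ← hv]
  rfl

/-- The factorization `M = (F | -G) (C ; C')` has minimal inner dimension `2m = rank M`, so its right
factor, and in particular `C`, has full row rank. -/
theorem exists_rightInverse {n : ℕ} [Fintype κ] [DecidableEq κ] {M : Matrix (Fin n) (Fin n) K}
    {F G : Matrix (Fin n) κ L} {C C' : Matrix κ (Fin n) L}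
    (hM : Module.finrank K (LinearMap.range M.mulVecLin) = 2 * Fintype.card κ)
    (h : M.map (algebraMap K L) = F * C - G * C') : ∃ Y : Matrix (Fin n) κ L, C * Y = 1 := by
  obtain ⟨Q, R, hRQ, hQ⟩ := exists_frame (κ := κ ⊕ κ) _
    (hM.trans (by rw [Fintype.card_sum, two_mul]))
  obtain ⟨X, rfl⟩ := exists_eq_mul_of_mem_range hQ
  have h1 := congrArg (fun T : Matrix (κ ⊕ κ) (κ ⊕ κ) K => T.map (algebraMap K L)) hRQ
  simp only [Matrix.map_mul, Matrix.map_one _ (map_zero (algebraMap K L))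
    (map_one (algebraMap K L))] at h1
  set R' := R.map (algebraMap K L)
  set X' := X.map (algebraMap K L)
  have h2 : (R' * fromCols F G) * (fromRows C (-C') * X') = 1 := by
    rw [← h1, h, Matrix.mul_assoc, ← Matrix.mul_assoc (fromCols F G), fromCols_mul_fromRows,
      Matrix.mul_neg, sub_eq_add_neg]
  have h3 := mul_eq_one_comm.1 h2
  rw [mul_fromCols, fromRows_mul, fromRows_mul_fromCols, ← fromBlocks_one, fromBlocks_inj] at h3
  exact ⟨X' * (R' * F), by rw [← h3.1, Matrix.mul_assoc]⟩

/-- If the two commutators together have rank `3m`, the columns of `B_1, B_2, B_3` are independent: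
they admit a dual system. -/
theorem exists_dual_s2 {n : ℕ} [Fintype κ] [DecidableEq κ] {M N : Matrix (Fin n) (Fin n) K}
    {B₁ B₂ B₃ : Matrix (Fin n) κ L} {C₁ C₂ C₃ : Matrix κ (Fin n) L}
    (hMN : Module.finrank K ↥(LinearMap.range M.mulVecLin ⊔ LinearMap.range N.mulVecLin)
      = 3 * Fintype.card κ)
    (hM : M.map (algebraMap K L) = B₂ * C₁ - B₁ * C₂)
    (hN : N.map (algebraMap K L) = B₃ * C₁ - B₁ * C₃) :
    ∃ E₁ E₂ E₃ : Matrix κ (Fin n) L,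
      (E₁ * B₁ = 1 ∧ E₁ * B₂ = 0 ∧ E₁ * B₃ = 0) ∧
      (E₂ * B₁ = 0 ∧ E₂ * B₂ = 1 ∧ E₂ * B₃ = 0) ∧
      (E₃ * B₁ = 0 ∧ E₃ * B₂ = 0 ∧ E₃ * B₃ = 1) := by
  obtain ⟨Q, R, hRQ, hQ⟩ := exists_frame (κ := κ ⊕ (κ ⊕ κ)) _
    (hMN.trans (by rw [Fintype.card_sum, Fintype.card_sum]; ring))
  obtain ⟨X, Y, rfl⟩ := exists_eq_mul_add_of_mem_sup hQ
  have h1 := congrArg (fun T : Matrix (κ ⊕ (κ ⊕ κ)) (κ ⊕ (κ ⊕ κ)) K =>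
    T.map (algebraMap K L)) hRQ
  simp only [Matrix.map_mul, Matrix.map_add _ (map_add (algebraMap K L)),
    Matrix.map_one _ (map_zero (algebraMap K L)) (map_one (algebraMap K L))] at h1
  set R' := R.map (algebraMap K L)
  set X' := X.map (algebraMap K L)
  set Y' := Y.map (algebraMap K L)
  let T := fromRows (-(C₂ * X') - C₃ * Y') (fromRows (C₁ * X') (C₁ * Y'))
  have h2 : (R' * fromCols B₁ (fromCols B₂ B₃)) * T = 1 := by
    rw [← h1, hM, hN, Matrix.mul_assoc, fromCols_mul_fromRows, fromCols_mul_fromRows]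
    simp only [Matrix.mul_sub, Matrix.sub_mul, Matrix.mul_neg, Matrix.mul_assoc]
    congr 1
    abel
  have h3 := mul_eq_one_comm.1 h2
  rw [← Matrix.mul_assoc] at h3
  set E := T * R'
  have h4 : fromRows E.toRows₁ (fromRows E.toRows₂.toRows₁ E.toRows₂.toRows₂) = E := by
    rw [fromRows_toRows, fromRows_toRows]
  rw [← h4, fromRows_mul_fromCols, ← fromBlocks_one, fromBlocks_inj, fromRows_mul_fromCols,
    ← fromBlocks_one, fromBlocks_inj, mul_fromCols, fromRows_mul] at h3
  obtain ⟨h11, h12, h21, h22, h23, h32, h33⟩ := h3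
  rw [← fromCols_zero, fromCols_ext_iff] at h12
  rw [← fromRows_zero, fromRows_ext_iff] at h21
  exact ⟨_, _, _, ⟨h11, h12.1, h12.2⟩, ⟨h21.1, h22, h23⟩, ⟨h21.2, h32, h33⟩⟩

/-- `Im [A_1, A_2] ∩ Im [A_1, A_3]` is a `K`-form of the column span of `B_1`. -/
theorem exists_rational_frame {n : ℕ} [Fintype κ] [DecidableEq κ]
    {M N : Matrix (Fin n) (Fin n) K}
    {B₁ B₂ B₃ : Matrix (Fin n) κ L} {C₁ C₂ C₃ : Matrix κ (Fin n) L}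
    (hM2 : Module.finrank K (LinearMap.range M.mulVecLin) = 2 * Fintype.card κ)
    (hN2 : Module.finrank K (LinearMap.range N.mulVecLin) = 2 * Fintype.card κ)
    (hMN : Module.finrank K ↥(LinearMap.range M.mulVecLin ⊔ LinearMap.range N.mulVecLin)
      = 3 * Fintype.card κ)
    (hM : M.map (algebraMap K L) = B₂ * C₁ - B₁ * C₂)
    (hN : N.map (algebraMap K L) = B₃ * C₁ - B₁ * C₃) :
    ∃ a a' : Matrix κ κ L, a * a' = 1 ∧ a' * a = 1 ∧ IsRational K (B₁ * a) := by
  obtain ⟨E₁, E₂, E₃, -, ⟨h21, h22, h23⟩, -⟩ := exists_dual_s2 hMN hM hN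
  have hinf : Module.finrank K
      ↥(LinearMap.range M.mulVecLin ⊓ LinearMap.range N.mulVecLin) = Fintype.card κ := by
    have := Submodule.finrank_sup_add_finrank_inf_eq (LinearMap.range M.mulVecLin)
      (LinearMap.range N.mulVecLin)
    omega
  obtain ⟨P, R, hRP, hP⟩ := exists_frame (κ := κ) _ hinf
  obtain ⟨X, hX⟩ := exists_eq_mul_of_mem_range fun j => (hP j).1
  obtain ⟨Y, hY⟩ := exists_eq_mul_of_mem_range fun j => (hP j).2
  replace hX := congrArg (fun T : Matrix (Fin n) κ K => T.map (algebraMap K L)) hX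
  replace hY := congrArg (fun T : Matrix (Fin n) κ K => T.map (algebraMap K L)) hY
  replace hRP := congrArg (fun T : Matrix κ κ K => T.map (algebraMap K L)) hRP
  simp only [Matrix.map_mul, Matrix.map_one _ (map_zero (algebraMap K L))
    (map_one (algebraMap K L)), hM, hN] at hX hY hRP
  set X' := X.map (algebraMap K L)
  set Y' := Y.map (algebraMap K L)
  -- the `B₂`-component of `P` vanishes, as `P` also lies in the span of `B₁` and `B₃`
  have h0 : C₁ * X' = 0 := by
    have h := congrArg (E₂ * ·) (hX.symm.trans hY)
    simpa only [Matrix.sub_mul, Matrix.mul_sub, ← Matrix.mul_assoc, h21, h22, h23,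
      Matrix.zero_mul, Matrix.one_mul, sub_zero] using h
  have hPB : P.map (algebraMap K L) = B₁ * (-(C₂ * X')) := by
    rw [hX, Matrix.sub_mul, Matrix.mul_assoc, h0, Matrix.mul_zero, zero_sub, Matrix.mul_neg,
      Matrix.mul_assoc]
  rw [hPB, ← Matrix.mul_assoc] at hRP
  exact ⟨_, _, mul_eq_one_comm.1 hRP, hRP, P, hPB.symm⟩

end Rational

/-! ### Descent of the extension -/

/-- (Theorem 1.1, descent to the ground field.) Under the rank
hypotheses (i) and (ii) on the commutators of `(A_1,A_2,A_3)` over `K`, if the tuple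
obtained by applying the embedding `K → L` entrywise admits a commuting extension of
size `r` over the extension field `L`, then `(A_1,A_2,A_3)` already admits a commuting
extension of size `r` over `K`. -/
theorem commutingExtension_descends
    (K L : Type*) [Field K] [Field L] [Algebra K L] (n r : ℕ) (hnr : n ≤ r)
    (A : Fin 3 → Matrix (Fin n) (Fin n) K)
    -- hypothesis (i)
    (hi12 : Module.finrank K
      ↥(LinearMap.range (A 0 * A 1 - A 1 * A 0).mulVecLin) = 2 * (r - n))
    (hi13 : Module.finrank K
      ↥(LinearMap.range (A 0 * A 2 - A 2 * A 0).mulVecLin) = 2 * (r - n))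
    (hi23 : Module.finrank K
      ↥(LinearMap.range (A 1 * A 2 - A 2 * A 1).mulVecLin) = 2 * (r - n))
    -- hypothesis (ii)
    (hii1 : Module.finrank K ↥(LinearMap.range (A 0 * A 1 - A 1 * A 0).mulVecLin ⊔
      LinearMap.range (A 0 * A 2 - A 2 * A 0).mulVecLin) = 3 * (r - n))
    (hii2 : Module.finrank K ↥(LinearMap.range (A 1 * A 0 - A 0 * A 1).mulVecLin ⊔
      LinearMap.range (A 1 * A 2 - A 2 * A 1).mulVecLin) = 3 * (r - n))
    (hii3 : Module.finrank K ↥(LinearMap.range (A 2 * A 0 - A 0 * A 2).mulVecLin ⊔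
      LinearMap.range (A 2 * A 1 - A 1 * A 2).mulVecLin) = 3 * (r - n))
    -- a commuting extension of size r over L of the mapped tuple
    (W : Fin 3 → Matrix (Fin n ⊕ Fin (r - n)) (Fin n ⊕ Fin (r - n)) L)
    (hWcomm : ∀ i j, W i * W j = W j * W i)
    (hWblock : ∀ i, ∃ (B : Matrix (Fin n) (Fin (r - n)) L)
        (C : Matrix (Fin (r - n)) (Fin n) L) (D : Matrix (Fin (r - n)) (Fin (r - n)) L),
        W i = Matrix.fromBlocks ((A i).map (algebraMap K L)) B C D) :
    ∃ Z : Fin 3 → Matrix (Fin n ⊕ Fin (r - n)) (Fin n ⊕ Fin (r - n)) K,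
      (∀ i j, Z i * Z j = Z j * Z i) ∧
      (∀ i, ∃ (B : Matrix (Fin n) (Fin (r - n)) K)
          (C : Matrix (Fin (r - n)) (Fin n) K) (D : Matrix (Fin (r - n)) (Fin (r - n)) K),
          Z i = Matrix.fromBlocks (A i) B C D) := by
  classical
  have hsw : ∀ i j, LinearMap.range (A i * A j - A j * A i).mulVecLin
      = LinearMap.range (A j * A i - A i * A j).mulVecLin := by
    intro i j
    rw [← neg_sub (A j * A i), show (-(A j * A i - A i * A j)).mulVecLin
      = -(A j * A i - A i * A j).mulVecLin from by
        ext; simp, LinearMap.range_neg]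
  have H1 : ∀ i j, i ≠ j → Module.finrank K
      ↥(LinearMap.range (A i * A j - A j * A i).mulVecLin) = 2 * Fintype.card (Fin (r - n)) := by
    rw [Fintype.card_fin]
    intro i j hij
    fin_cases i <;> fin_cases j <;> first | exact absurd rfl hij | assumption | (rw [hsw]; assumption)
  have H2 : ∀ i j k, i ≠ j → i ≠ k → j ≠ k → Module.finrank K
      ↥(LinearMap.range (A i * A j - A j * A i).mulVecLin ⊔
        LinearMap.range (A i * A k - A k * A i).mulVecLin) = 3 * Fintype.card (Fin (r - n)) := by
    rw [Fintype.card_fin]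
    intro i j k hij hik hjk
    fin_cases i <;> fin_cases j <;> fin_cases k <;>
      first
      | exact absurd rfl hij | exact absurd rfl hik | exact absurd rfl hjk
      | assumption | (rw [sup_comm]; assumption)
  choose B C D hW using hWblock
  have hcomm : ∀ i j, _ := fun i j => hWcomm i j
  simp only [hW, fromBlocks_multiply, fromBlocks_inj] at hcomm
  have hA : ∀ i j, (A i * A j - A j * A i).map (algebraMap K L) = B j * C i - B i * C j := by
    intro i j
    have h := (hcomm i j).1
    rw [Matrix.map_sub _ (map_sub (algebraMap K L)), Matrix.map_mul, Matrix.map_mul,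
      sub_eq_sub_iff_add_eq_add, h, add_comm]
  have hthird : ∀ i j : Fin 3, i ≠ j → ∃ k, i ≠ k ∧ j ≠ k := by decide
  have hother : ∀ i : Fin 3, ∃ j, i ≠ j := by decide
  -- independence of the columns of all the `B i`
  have hdual : ∀ i j, i ≠ j → ∃ E F : Matrix (Fin (r - n)) (Fin n) L,
      E * B i = 1 ∧ E * B j = 0 ∧ F * B i = 0 ∧ F * B j = 1 := by
    intro i j hij
    obtain ⟨k, hik, hjk⟩ := hthird i j hij
    obtain ⟨E₁, E₂, E₃, ⟨h1, h2, -⟩, ⟨h3, h4, -⟩, -⟩ :=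
      exists_dual_s2 (H2 i j k hij hik hjk) (hA i j) (hA i k)
    exact ⟨E₁, E₂, h1, h2, h3, h4⟩
  have hfr : ∀ i, ∃ a a' : Matrix (Fin (r - n)) (Fin (r - n)) L,
      a * a' = 1 ∧ a' * a = 1 ∧ IsRational K (B i * a) := by
    intro i
    obtain ⟨j, hij⟩ := hother i
    obtain ⟨k, hik, hjk⟩ := hthird i j hij
    exact exists_rational_frame (H1 i j hij) (H1 i k hik) (H2 i j k hij hik hjk) (hA i j) (hA i k)
  choose a a' haa' ha'a hBa using hfr
  have hcancel : ∀ i {κ : Type} (X : Matrix (Fin (r - n)) κ L), a i * (a' i * X) = X := by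
    intro i κ X
    rw [← Matrix.mul_assoc, haa', Matrix.one_mul]
  have hcancel' : ∀ i {κ : Type} (X : Matrix (Fin (r - n)) κ L), a' i * (a i * X) = X := by
    intro i κ X
    rw [← Matrix.mul_assoc, ha'a, Matrix.one_mul]
  have hCrat : ∀ i k, i ≠ k → IsRational K (a' i * C k) := by
    intro i k hik
    obtain ⟨E, F, h1, h2, h3, h4⟩ := hdual i k hik
    refine IsRational.of_pair (U := B i * a i) (V := B k * a k) (Y := a' k * C i)
      (E := a' i * E) (F := a' k * F) (hBa i) (hBa k) (IsRational.map (A k * A i - A i * A k))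
      ?_ ?_ ?_ ?_ ?_
    · rw [Matrix.mul_assoc, ← Matrix.mul_assoc E, h1, Matrix.one_mul, ha'a]
    · rw [Matrix.mul_assoc, ← Matrix.mul_assoc E, h2, Matrix.zero_mul, Matrix.mul_zero]
    · rw [Matrix.mul_assoc, ← Matrix.mul_assoc F, h3, Matrix.zero_mul, Matrix.mul_zero]
    · rw [Matrix.mul_assoc, ← Matrix.mul_assoc F, h4, Matrix.one_mul, ha'a]
    · rw [hA, Matrix.mul_assoc, Matrix.mul_assoc, hcancel, hcancel]
  -- conjugation by `diag(1, a 0)` makes all the `B i` rational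
  have hBrat : ∀ i, IsRational K (B i * a 0) := by
    intro i
    by_cases hi : i = 0
    · subst hi
      exact hBa 0
    obtain ⟨k, hik, h0k⟩ := hthird i 0 hi
    obtain ⟨Y, hY⟩ := exists_rightInverse (H1 k i hik.symm) (hA k i)
    have hh : IsRational K (a' i * a 0) := by
      refine IsRational.of_mul_eq' (E := Y * a 0) (hCrat 0 k h0k) (hCrat i k hik) ?_ ?_
      · rw [Matrix.mul_assoc, ← Matrix.mul_assoc (C k), hY, Matrix.one_mul, ha'a]
      · rw [Matrix.mul_assoc, hcancel]
    have := (hBa i).mul hh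
    rwa [Matrix.mul_assoc, hcancel] at this
  -- a dual system for the rational `B i * a 0`, so that they determine the remaining blocks
  have hdual' : ∀ i j, i ≠ j → ∃ E F : Matrix (Fin (r - n)) (Fin n) L,
      E * (B i * a 0) = 1 ∧ E * (B j * a 0) = 0 ∧ F * (B i * a 0) = 0 ∧ F * (B j * a 0) = 1 := by
    intro i j hij
    obtain ⟨E, F, h1, h2, h3, h4⟩ := hdual i j hij
    refine ⟨a' 0 * E, a' 0 * F, ?_, ?_, ?_, ?_⟩
    · rw [Matrix.mul_assoc, ← Matrix.mul_assoc E, h1, Matrix.one_mul, ha'a]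
    · rw [Matrix.mul_assoc, ← Matrix.mul_assoc E, h2, Matrix.zero_mul, Matrix.mul_zero]
    · rw [Matrix.mul_assoc, ← Matrix.mul_assoc F, h3, Matrix.zero_mul, Matrix.mul_zero]
    · rw [Matrix.mul_assoc, ← Matrix.mul_assoc F, h4, Matrix.one_mul, ha'a]
  have hCrat' : ∀ i, IsRational K (a' 0 * C i) := by
    intro i
    obtain ⟨j, hij⟩ := hother i
    obtain ⟨E, F, h1, h2, h3, h4⟩ := hdual' j i hij.symm
    refine IsRational.of_pair (Y := a' 0 * C j) (hBrat j) (hBrat i)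
      (IsRational.map (A i * A j - A j * A i)) h1 h2 h3 h4 ?_
    rw [hA, Matrix.mul_assoc, Matrix.mul_assoc, hcancel, hcancel]
  have hDrat : ∀ i, IsRational K (a' 0 * (D i * a 0)) := by
    intro i
    obtain ⟨j, hij⟩ := hother i
    obtain ⟨E, F, h1, h2, h3, h4⟩ := hdual' j i hij.symm
    refine IsRational.of_pair (Y := a' 0 * (D j * a 0)) (hBrat j) (hBrat i)
      (((IsRational.map (A i)).mul (hBrat j)).sub ((IsRational.map (A j)).mul (hBrat i)))
      h1 h2 h3 h4 ?_
    have h := congrArg (· * a 0) (hcomm i j).2.1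
    simp only [Matrix.add_mul, Matrix.mul_assoc] at h
    rw [Matrix.mul_assoc, Matrix.mul_assoc, hcancel, hcancel, sub_eq_sub_iff_add_eq_add, h,
      add_comm]
  choose B₀ hB₀ using hBrat
  choose C₀ hC₀ using hCrat'
  choose D₀ hD₀ using hDrat
  refine ⟨fun i => fromBlocks (A i) (B₀ i) (C₀ i) (D₀ i), fun i j => ?_,
    fun i => ⟨_, _, _, rfl⟩⟩
  apply Matrix.map_injective (algebraMap K L).injective
  simp only [Matrix.map_mul, fromBlocks_map, ← hB₀, ← hC₀, ← hD₀]
  rw [fromBlocks_multiply, fromBlocks_multiply, fromBlocks_inj]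
  obtain ⟨h1, h2, h3, h4⟩ := hcomm i j
  refine ⟨?_, ?_, ?_, ?_⟩
  · simpa only [Matrix.mul_assoc, hcancel] using h1
  · simpa only [Matrix.add_mul, Matrix.mul_assoc, hcancel] using congrArg (· * a 0) h2
  · simpa only [Matrix.mul_add, Matrix.mul_assoc, hcancel] using congrArg (a' 0 * ·) h3
  · simpa only [Matrix.mul_add, Matrix.add_mul, Matrix.mul_assoc, hcancel]
      using congrArg (fun T => a' 0 * (T * a 0)) h4
end

section
/- Let K be a field, n ≤ r, and let (Z_1,…,Z_p) be a commuting extension of size r of a tuple (A_1,…,A_p) of n×n matrices over K, with blocks Z_i = [[A_i, B_i],[C_i, D_i]]. Then for every pair of indices k, l one has [A_k,A_l] = B_l C_k − B_k C_l, and rank [A_k,A_l] ≤ 2(r−n). -/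
open Matrix

/-- If `(Z_1,…,Z_p)` is a commuting extension of size `r` of
`(A_1,…,A_p)` with blocks `Z_i = [[A_i, B_i],[C_i, D_i]]`, then for all indices `k, l`,
`[A_k,A_l] = B_l C_k − B_k C_l` and `rank [A_k,A_l] ≤ 2(r−n)`. -/
theorem commutator_eq_and_rank_le_of_commutingExtension
    (K : Type*) [Field K] (n r p : ℕ) (hnr : n ≤ r)
    (A : Fin p → Matrix (Fin n) (Fin n) K)
    (B : Fin p → Matrix (Fin n) (Fin (r - n)) K)
    (C : Fin p → Matrix (Fin (r - n)) (Fin n) K)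
    (D : Fin p → Matrix (Fin (r - n)) (Fin (r - n)) K)
    (Z : Fin p → Matrix (Fin n ⊕ Fin (r - n)) (Fin n ⊕ Fin (r - n)) K)
    (hblock : ∀ i, Z i = Matrix.fromBlocks (A i) (B i) (C i) (D i))
    (hcomm : ∀ i j, Z i * Z j = Z j * Z i)
    (k l : Fin p) :
    A k * A l - A l * A k = B l * C k - B k * C l ∧
      (A k * A l - A l * A k).rank ≤ 2 * (r - n) := by
  have h := hcomm k l
  rw [hblock, hblock, fromBlocks_multiply, fromBlocks_multiply, fromBlocks_inj] at h
  have hA : A k * A l - A l * A k = B l * C k - B k * C l := by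
    rw [sub_eq_sub_iff_add_eq_add, h.1, add_comm]
  refine ⟨hA, ?_⟩
  -- The commutator factors through a space of dimension `(r - n) + (r - n)`.
  have hfac : A k * A l - A l * A k =
      fromCols (B l) (-B k) * fromRows (C k) (C l) := by
    rw [hA, fromCols_mul_fromRows, Matrix.neg_mul, sub_eq_add_neg]
  rw [hfac]
  refine (rank_mul_le_left _ _).trans ((rank_le_card_width _).trans ?_)
  simp [two_mul]
end

section
/- Let K be a field, n ≤ r, and let (Z_1,…,Z_p) be a commuting extension of size r of a tuple (A_1,…,A_p) of n×n matrices over K, with blocks Z_i = [[A_i, B_i],[C_i, D_i]]. Suppose that for some pair of indices k, l one has rank [A_k,A_l] = 2(r−n). Then 2r ≤ 3n, the matrices B_k, B_l, C_k, C_l all have rank r−n, Im [A_k,A_l] = Im B_k + Im B_l with Im B_k ∩ Im B_l = {0}, and Im ([A_k,A_l]^T) = Im (C_k^T) + Im (C_l^T) with Im (C_k^T) ∩ Im (C_l^T) = {0}. -/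
open Matrix

/-!
The upper-left block of `Z_k Z_l = Z_l Z_k` reads `[A_k, A_l] = B_l C_k - B_k C_l`, so the image of
the commutator lies in `Im B_k + Im B_l`, a sum of two spaces of dimension at most `r - n`. If the
commutator has rank `2 (r - n)`, every inequality in this dimension count is an equality
(`range_eq_of_rank_mul_sub_mul`). Transposing gives `[A_k, A_l]ᵀ = C_kᵀ B_lᵀ - C_lᵀ B_kᵀ`, which
has the same shape and the same rank, so the same count settles the blocks `C_k`, `C_l`. The bound
`2 r ≤ 3 n` expresses that the rank of an `n × n` matrix is at most `n`.
-/

/-- The equality case of the bound `rank (P * Q - R * S) ≤ 2 * m` for products that factor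
through dimension `m`. -/
lemma range_eq_of_rank_mul_sub_mul {K : Type*} [Field K] {n m : ℕ}
    (P R : Matrix (Fin n) (Fin m) K) (Q S : Matrix (Fin m) (Fin n) K)
    (h : (P * Q - R * S).rank = 2 * m) :
    P.rank = m ∧ R.rank = m ∧
    LinearMap.range (P * Q - R * S).mulVecLin =
      LinearMap.range P.mulVecLin ⊔ LinearMap.range R.mulVecLin ∧
    LinearMap.range P.mulVecLin ⊓ LinearMap.range R.mulVecLin = ⊥ := by
  have hle : LinearMap.range (P * Q - R * S).mulVecLin ≤
      LinearMap.range P.mulVecLin ⊔ LinearMap.range R.mulVecLin := by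
    rintro _ ⟨x, rfl⟩
    rw [Matrix.mulVecLin_apply, Matrix.sub_mulVec, ← Matrix.mulVec_mulVec, ← Matrix.mulVec_mulVec]
    exact Submodule.sub_mem _ (Submodule.mem_sup_left ⟨Q *ᵥ x, rfl⟩)
      (Submodule.mem_sup_right ⟨S *ᵥ x, rfl⟩)
  have hP : P.rank ≤ m := P.rank_le_width
  have hR : R.rank ≤ m := R.rank_le_width
  have hdim := Submodule.finrank_sup_add_finrank_inf_eq
    (LinearMap.range P.mulVecLin) (LinearMap.range R.mulVecLin)
  have hmono := Submodule.finrank_mono hle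
  unfold Matrix.rank at h hP hR ⊢
  refine ⟨by omega, by omega, Submodule.eq_of_le_of_finrank_eq hle (by omega), ?_⟩
  exact Submodule.finrank_eq_zero.mp (by omega)

/-- (Lemma 2.1, second part.) In a commuting extension, if
`rank [A_k,A_l] = 2(r−n)` then `2r ≤ 3n`, the off-diagonal blocks `B_k, B_l, C_k, C_l`
all have rank `r−n`, `Im [A_k,A_l] = Im B_k ⊕ Im B_l` and
`Im [A_k,A_l]ᵀ = Im C_kᵀ ⊕ Im C_lᵀ`. -/
theorem blocks_of_commutator_rank_eq
    (K : Type*) [Field K] (n r p : ℕ) (hnr : n ≤ r)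
    (A : Fin p → Matrix (Fin n) (Fin n) K)
    (B : Fin p → Matrix (Fin n) (Fin (r - n)) K)
    (C : Fin p → Matrix (Fin (r - n)) (Fin n) K)
    (D : Fin p → Matrix (Fin (r - n)) (Fin (r - n)) K)
    (Z : Fin p → Matrix (Fin n ⊕ Fin (r - n)) (Fin n ⊕ Fin (r - n)) K)
    (hblock : ∀ i, Z i = Matrix.fromBlocks (A i) (B i) (C i) (D i))
    (hcomm : ∀ i j, Z i * Z j = Z j * Z i)
    (k l : Fin p)
    (hrank : (A k * A l - A l * A k).rank = 2 * (r - n)) :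
    2 * r ≤ 3 * n ∧
    (B k).rank = r - n ∧ (B l).rank = r - n ∧
    (C k).rank = r - n ∧ (C l).rank = r - n ∧
    (LinearMap.range (A k * A l - A l * A k).mulVecLin =
      LinearMap.range (B k).mulVecLin ⊔ LinearMap.range (B l).mulVecLin) ∧
    (LinearMap.range (B k).mulVecLin ⊓ LinearMap.range (B l).mulVecLin = ⊥) ∧
    (LinearMap.range (A k * A l - A l * A k)ᵀ.mulVecLin =
      LinearMap.range (C k)ᵀ.mulVecLin ⊔ LinearMap.range (C l)ᵀ.mulVecLin) ∧
    (LinearMap.range (C k)ᵀ.mulVecLin ⊓ LinearMap.range (C l)ᵀ.mulVecLin = ⊥) := by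
  have hM : A k * A l - A l * A k = B l * C k - B k * C l := by
    have h := hcomm k l
    rw [hblock, hblock, Matrix.fromBlocks_multiply, Matrix.fromBlocks_multiply,
      Matrix.fromBlocks_inj] at h
    rw [sub_eq_sub_iff_add_eq_add, h.1, add_comm]
  have hMT : (A k * A l - A l * A k)ᵀ = (C k)ᵀ * (B l)ᵀ - (C l)ᵀ * (B k)ᵀ := by
    rw [hM, Matrix.transpose_sub, Matrix.transpose_mul, Matrix.transpose_mul]
  have hn : (A k * A l - A l * A k).rank ≤ n := Matrix.rank_le_width _
  have hrankT : (A k * A l - A l * A k)ᵀ.rank = 2 * (r - n) := by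
    rw [Matrix.rank_transpose, hrank]
  rw [hMT] at hrankT ⊢
  rw [hM] at hrank hn ⊢
  obtain ⟨hBl, hBk, hB, hB'⟩ := range_eq_of_rank_mul_sub_mul _ _ _ _ hrank
  obtain ⟨hCk, hCl, hC, hC'⟩ := range_eq_of_rank_mul_sub_mul _ _ _ _ hrankT
  rw [Matrix.rank_transpose] at hCk hCl
  exact ⟨by omega, hBk, hBl, hCk, hCl, by rw [hB, sup_comm], by rw [inf_comm, hB'], hC, hC'⟩
end

section
/- Let K be a field, n ≤ r, and let (Z_1,…,Z_p) be a commuting extension of size r of a tuple (A_1,…,A_p) of n×n matrices over K, with blocks Z_i = [[A_i, B_i],[C_i, D_i]]. For any triple of indices k, l, m, the subspace V_{klm} = Im [A_k,A_l] + Im [A_k,A_m] satisfies dim V_{klm} ≤ 3(r−n). If moreover dim V_{klm} = 3(r−n), then 3r ≤ 4n, the matrices B_k, B_l, B_m each have rank r−n, and V_{klm} is the direct sum of Im B_k, Im B_l and Im B_m (i.e. V_{klm} = Im B_k + Im B_l + Im B_m and the three subspaces Im B_k, Im B_l, Im B_m are independent). -/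
/-!
The top-left block of `Z i * Z j = Z j * Z i` reads
`A i * A j - A j * A i = B j * C i - B i * C j`, so the image of each commutator lies in
`Im (B i) + Im (B j)`, and `V` lies in `Im (B k) + Im (B l) + Im (B m)`. Each of these three
images has dimension at most `r - n`, which gives the bound. If `V` has dimension `3 * (r - n)`,
the inclusion is an equality and every dimension estimate is sharp, which forces full ranks and
independence; `3 * (r - n) ≤ n` holds because `V` is a subspace of `K ^ n`.
-/

open Matrix

/-- A sum of three subspaces of dimension at most `d` whose dimension is at least `3 * d` has
a first summand of dimension exactly `d`, independent of the other two. -/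
lemma finrank_eq_and_inf_eq_bot_of_three_mul_le {K V : Type*} [Field K] [AddCommGroup V]
    [Module K V] [FiniteDimensional K V] {P Q R : Submodule K V} {d : ℕ}
    (hP : Module.finrank K P ≤ d) (hQ : Module.finrank K Q ≤ d) (hR : Module.finrank K R ≤ d)
    (h : 3 * d ≤ Module.finrank K ↥(P ⊔ (Q ⊔ R))) :
    Module.finrank K P = d ∧ P ⊓ (Q ⊔ R) = ⊥ := by
  have h1 := Submodule.finrank_sup_add_finrank_inf_eq P (Q ⊔ R)
  have h2 := Submodule.finrank_add_le_finrank_add_finrank Q R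
  refine ⟨by omega, Submodule.finrank_eq_zero.mp (by omega)⟩

lemma range_mul_sub_mul_le {K m n : Type*} [Field K] [Fintype m] [Fintype n]
    (B B' : Matrix m n K) (C C' : Matrix n m K) :
    LinearMap.range (B' * C - B * C').mulVecLin ≤
      LinearMap.range B.mulVecLin ⊔ LinearMap.range B'.mulVecLin := by
  rintro _ ⟨x, rfl⟩
  rw [Matrix.mulVecLin_apply, Matrix.sub_mulVec, ← Matrix.mulVec_mulVec, ← Matrix.mulVec_mulVec]
  exact sub_mem (Submodule.mem_sup_right ⟨C *ᵥ x, rfl⟩) (Submodule.mem_sup_left ⟨C' *ᵥ x, rfl⟩)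

/-- (Proposition 2.2.) In a commuting extension, for any triple of
indices `k, l, m`, the subspace `V_{klm} = Im [A_k,A_l] + Im [A_k,A_m]` has dimension at
most `3(r−n)`; and if equality holds then `3r ≤ 4n`, the blocks `B_k, B_l, B_m` have rank
`r−n`, and `V_{klm} = Im B_k ⊕ Im B_l ⊕ Im B_m` (a direct sum). -/
theorem dim_sum_two_commutators_le
    (K : Type*) [Field K] (n r p : ℕ) (hnr : n ≤ r)
    (A : Fin p → Matrix (Fin n) (Fin n) K)
    (B : Fin p → Matrix (Fin n) (Fin (r - n)) K)
    (C : Fin p → Matrix (Fin (r - n)) (Fin n) K)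
    (D : Fin p → Matrix (Fin (r - n)) (Fin (r - n)) K)
    (Z : Fin p → Matrix (Fin n ⊕ Fin (r - n)) (Fin n ⊕ Fin (r - n)) K)
    (hblock : ∀ i, Z i = Matrix.fromBlocks (A i) (B i) (C i) (D i))
    (hcomm : ∀ i j, Z i * Z j = Z j * Z i)
    (k l m : Fin p) :
    Module.finrank K ↥(LinearMap.range (A k * A l - A l * A k).mulVecLin ⊔
        LinearMap.range (A k * A m - A m * A k).mulVecLin) ≤ 3 * (r - n) ∧
    (Module.finrank K ↥(LinearMap.range (A k * A l - A l * A k).mulVecLin ⊔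
        LinearMap.range (A k * A m - A m * A k).mulVecLin) = 3 * (r - n) →
      3 * r ≤ 4 * n ∧
      (B k).rank = r - n ∧ (B l).rank = r - n ∧ (B m).rank = r - n ∧
      (LinearMap.range (A k * A l - A l * A k).mulVecLin ⊔
          LinearMap.range (A k * A m - A m * A k).mulVecLin =
        LinearMap.range (B k).mulVecLin ⊔ LinearMap.range (B l).mulVecLin ⊔
          LinearMap.range (B m).mulVecLin) ∧
      (LinearMap.range (B k).mulVecLin ⊓
        (LinearMap.range (B l).mulVecLin ⊔ LinearMap.range (B m).mulVecLin) = ⊥) ∧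
      (LinearMap.range (B l).mulVecLin ⊓
        (LinearMap.range (B k).mulVecLin ⊔ LinearMap.range (B m).mulVecLin) = ⊥) ∧
      (LinearMap.range (B m).mulVecLin ⊓
        (LinearMap.range (B k).mulVecLin ⊔ LinearMap.range (B l).mulVecLin) = ⊥)) := by
  have hcom : ∀ i j, A i * A j - A j * A i = B j * C i - B i * C j := by
    intro i j
    have h := hcomm i j
    rw [hblock, hblock, Matrix.fromBlocks_multiply, Matrix.fromBlocks_multiply,
      Matrix.fromBlocks_inj] at h
    rw [sub_eq_sub_iff_add_eq_add, h.1, add_comm]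
  have hle : ∀ i j, LinearMap.range (A i * A j - A j * A i).mulVecLin ≤
      LinearMap.range (B i).mulVecLin ⊔ LinearMap.range (B j).mulVecLin := by
    intro i j
    rw [hcom]
    exact range_mul_sub_mul_le _ _ _ _
  have hrk : ∀ i, Module.finrank K (LinearMap.range (B i).mulVecLin) ≤ r - n := fun i =>
    (B i).rank_le_width
  have hV := sup_le ((hle k l).trans le_sup_left)
    ((hle k m).trans (sup_le_sup_right (le_sup_left (b := LinearMap.range (B l).mulVecLin)) _))
  have hdim := Submodule.finrank_mono hV
  have h1 := Submodule.finrank_add_le_finrank_add_finrank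
    (LinearMap.range (B k).mulVecLin ⊔ LinearMap.range (B l).mulVecLin)
    (LinearMap.range (B m).mulVecLin)
  have h2 := Submodule.finrank_add_le_finrank_add_finrank
    (LinearMap.range (B k).mulVecLin) (LinearMap.range (B l).mulVecLin)
  have hk := hrk k
  have hl := hrk l
  have hm := hrk m
  refine ⟨by omega, fun heq => ?_⟩
  have hn := Submodule.finrank_le (LinearMap.range (A k * A l - A l * A k).mulVecLin ⊔
        LinearMap.range (A k * A m - A m * A k).mulVecLin)
  rw [Module.finrank_fin_fun] at hn
  have hge := heq.symm.le.trans hdim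
  obtain ⟨ek, ik⟩ := finrank_eq_and_inf_eq_bot_of_three_mul_le hk hl hm
    (by rwa [← sup_assoc])
  obtain ⟨el, il⟩ := finrank_eq_and_inf_eq_bot_of_three_mul_le hl hk hm
    (by rwa [sup_left_comm, ← sup_assoc])
  obtain ⟨em, im⟩ := finrank_eq_and_inf_eq_bot_of_three_mul_le hm hk hl
    (by rwa [sup_comm])
  exact ⟨by omega, ek, el, em, Submodule.eq_of_le_of_finrank_le hV (by omega), ik, il, im⟩
end

section
/- Let K be a field, n ≤ r, and let (Z_1,…,Z_p) be a commuting extension of size r of a tuple (A_1,…,A_p) of n×n matrices over K, with blocks Z_i = [[A_i, B_i],[C_i, D_i]]. Suppose that for indices k, l, m one has dim (Im [A_k,A_l] + Im [A_k,A_m]) = 3(r−n), dim Im [A_k,A_l] = 2(r−n) and dim Im [A_k,A_m] = 2(r−n). Then Im B_k = Im [A_k,A_l] ∩ Im [A_k,A_m]. -/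
/-!
Comparing the top-left blocks of `Z_k Z_l = Z_l Z_k` gives `[A_k, A_l] = B_l C_k - B_k C_l`, so
`Im [A_k, A_l] ⊆ Im B_k + Im B_l`. Both `B_k` and `B_l` have `d = r - n` columns, so if
`dim Im [A_k, A_l] = 2d` then this inclusion is an equality and `dim Im B_k = d`
(`range_le_range_commutator`). Applied to `(k, l)` and `(k, m)` this puts `Im B_k`, of dimension `d`,
inside `Im [A_k, A_l] ∩ Im [A_k, A_m]`, whose dimension is `2d + 2d - 3d = d`.
-/

open Matrix

/-- A commutator of the form `B' * C - B * C'` of the maximal possible rank `2 * d` has a range that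
contains that of `B`, and forces `B` to have full column rank. -/
lemma range_le_range_commutator {K : Type*} [Field K] {n d : ℕ}
    {A A' : Matrix (Fin n) (Fin n) K} {B B' : Matrix (Fin n) (Fin d) K}
    {C C' : Matrix (Fin d) (Fin n) K} {D D' : Matrix (Fin d) (Fin d) K}
    (h : fromBlocks A B C D * fromBlocks A' B' C' D' =
      fromBlocks A' B' C' D' * fromBlocks A B C D)
    (hr : Module.finrank K (LinearMap.range (A * A' - A' * A).mulVecLin) = 2 * d) :
    LinearMap.range B.mulVecLin ≤ LinearMap.range (A * A' - A' * A).mulVecLin ∧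
      d ≤ Module.finrank K (LinearMap.range B.mulVecLin) := by
  have hc : A * A' - A' * A = B' * C - B * C' := by
    rw [fromBlocks_multiply, fromBlocks_multiply, fromBlocks_inj] at h
    rw [sub_eq_sub_iff_add_eq_add, h.1, add_comm]
  have hle : LinearMap.range (A * A' - A' * A).mulVecLin ≤
      LinearMap.range B.mulVecLin ⊔ LinearMap.range B'.mulVecLin := by
    rintro _ ⟨x, rfl⟩
    rw [hc, mulVecLin_apply, sub_mulVec, ← mulVec_mulVec, ← mulVec_mulVec]
    exact sub_mem (Submodule.mem_sup_right ⟨_, rfl⟩) (Submodule.mem_sup_left ⟨_, rfl⟩)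
  have hB : Module.finrank K (LinearMap.range B.mulVecLin) ≤ d := by
    exact B.rank_le_width
  have hB' : Module.finrank K (LinearMap.range B'.mulVecLin) ≤ d := by
    exact B'.rank_le_width
  have hsup := Submodule.finrank_add_le_finrank_add_finrank
    (LinearMap.range B.mulVecLin) (LinearMap.range B'.mulVecLin)
  have hmono := Submodule.finrank_mono hle
  have heq := Submodule.eq_of_le_of_finrank_le hle (by omega)
  exact ⟨heq ▸ le_sup_left, by omega⟩

/-- (Corollary 2.3.) In a commuting extension, if
`dim (Im [A_k,A_l] + Im [A_k,A_m]) = 3(r−n)`, `dim Im [A_k,A_l] = 2(r−n)` and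
`dim Im [A_k,A_m] = 2(r−n)`, then `Im B_k = Im [A_k,A_l] ∩ Im [A_k,A_m]`. -/
theorem range_topRightBlock_eq_inf
    (K : Type*) [Field K] (n r p : ℕ) (hnr : n ≤ r)
    (A : Fin p → Matrix (Fin n) (Fin n) K)
    (B : Fin p → Matrix (Fin n) (Fin (r - n)) K)
    (C : Fin p → Matrix (Fin (r - n)) (Fin n) K)
    (D : Fin p → Matrix (Fin (r - n)) (Fin (r - n)) K)
    (Z : Fin p → Matrix (Fin n ⊕ Fin (r - n)) (Fin n ⊕ Fin (r - n)) K)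
    (hblock : ∀ i, Z i = Matrix.fromBlocks (A i) (B i) (C i) (D i))
    (hcomm : ∀ i j, Z i * Z j = Z j * Z i)
    (k l m : Fin p)
    (hsum : Module.finrank K ↥(LinearMap.range (A k * A l - A l * A k).mulVecLin ⊔
        LinearMap.range (A k * A m - A m * A k).mulVecLin) = 3 * (r - n))
    (hkl : Module.finrank K ↥(LinearMap.range (A k * A l - A l * A k).mulVecLin) = 2 * (r - n))
    (hkm : Module.finrank K ↥(LinearMap.range (A k * A m - A m * A k).mulVecLin) = 2 * (r - n)) :
    LinearMap.range (B k).mulVecLin =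
      LinearMap.range (A k * A l - A l * A k).mulVecLin ⊓
        LinearMap.range (A k * A m - A m * A k).mulVecLin := by
  have hcomm' : ∀ i j, fromBlocks (A i) (B i) (C i) (D i) * fromBlocks (A j) (B j) (C j) (D j) =
      fromBlocks (A j) (B j) (C j) (D j) * fromBlocks (A i) (B i) (C i) (D i) := by
    intro i j
    rw [← hblock, ← hblock, hcomm]
  obtain ⟨hl, hd⟩ := range_le_range_commutator (hcomm' k l) hkl
  obtain ⟨hm, -⟩ := range_le_range_commutator (hcomm' k m) hkm
  have hdim := Submodule.finrank_sup_add_finrank_inf_eq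
    (LinearMap.range (A k * A l - A l * A k).mulVecLin)
    (LinearMap.range (A k * A m - A m * A k).mulVecLin)
  exact Submodule.eq_of_le_of_finrank_le (le_inf hl hm) (by omega)
end

section
/- Let K be a field and n ≤ r. Let (A_1,A_2,A_3) be n×n matrices over K such that (i) the three subspaces Im [A_1,A_2], Im [A_1,A_3], Im [A_2,A_3] each have dimension 2(r−n), and (ii) the three subspaces Im [A_1,A_2]+Im [A_1,A_3], Im [A_2,A_1]+Im [A_2,A_3], Im [A_3,A_1]+Im [A_3,A_2] each have dimension 3(r−n). If (Z_1,Z_2,Z_3) and (Z'_1,Z'_2,Z'_3) are two commuting extensions of (A_1,A_2,A_3) of size r, with blocks Z_i = [[A_i, B_i],[C_i, D_i]] and Z'_i = [[A_i, B'_i],[C'_i, D'_i]], such that B_1 = B'_1, then Z_i = Z'_i for i = 1,2,3. -/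
/-!
Write `m = r - n`; the indices `1, 2, 3` below are `0, 1, 2` in `Fin 3`. Commutation of the
extensions says, in the top blocks, that
`[A_i, A_j] = B_j C_i - B_i C_j` and `A_i B_j + B_i D_j = A_j B_i + B_j D_i`.

The rank hypotheses turn into one-sided inverses. By (i) the `2m × n` matrix with blocks `C_i, C_j`
has full row rank (`exists_dual_right`), and by (ii) the `n × 3m` matrix `(B_1 | B_2 | B_3)` has
full column rank, so that there are `L_i` with `L_i B_j = δ_ij` (`exists_dual_left`).

The first fact, for the second extension, puts the columns of `B'_j` in
`(Im B_i + Im B_j) ∩ (Im B_k + Im B_j)`, which is `Im B_j` by the second fact for the first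
extension; hence `B'_j = B_j P_j`. Comparing the two expressions of `[A_i, A_j]` gives
`C_i = P_j C'_i` for `i ≠ j`. From `P_1 = 1` (as `B_1 = B'_1`) follows `C_i = C'_i` for `i ≠ 1`,
then `P_j = 1` for
every `j` because `C_i` is surjective, so all the `B` and `C` blocks agree. The top-right blocks
of the commutation relations then force the `D` blocks to agree.
-/

open Matrix

/-- A matrix of full row rank has a right inverse. -/
lemma exists_right_inverse_of_card_le_rank {K : Type*} [Field K] {ι κ : Type*} [Fintype ι]
    [Fintype κ] [DecidableEq ι] [DecidableEq κ] (M : Matrix ι κ K)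
    (h : Fintype.card ι ≤ M.rank) : ∃ R : Matrix κ ι K, M * R = 1 := by
  refine Matrix.mulVec_surjective_iff_exists_right_inverse.1 ?_
  have h2 : LinearMap.range M.mulVecLin = ⊤ := by
    apply Submodule.eq_top_of_finrank_eq
    rw [Module.finrank_fintype_fun_eq_card]
    exact le_antisymm (M.rank_le_card_height) h
  exact LinearMap.range_eq_top.1 h2

/-- A matrix of full column rank has a left inverse. -/
lemma exists_left_inverse_of_card_le_rank {K : Type*} [Field K] {ι κ : Type*} [Fintype ι]
    [Fintype κ] [DecidableEq ι] [DecidableEq κ] (M : Matrix ι κ K)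
    (h : Fintype.card κ ≤ M.rank) : ∃ L : Matrix κ ι K, L * M = 1 := by
  obtain ⟨R, hR⟩ := exists_right_inverse_of_card_le_rank Mᵀ (by rwa [Matrix.rank_transpose])
  refine ⟨Rᵀ, ?_⟩
  rw [← Matrix.transpose_inj, Matrix.transpose_mul, Matrix.transpose_transpose, hR,
    Matrix.transpose_one]

/-- If `B_j C_i - B_i C_j` has rank at least `2m`, then the stacked matrix of `C_i` and `C_j` has
a right inverse, given here by its two column blocks. -/
lemma exists_dual_right {K : Type*} [Field K] {n m : ℕ}
    (Bi Bj : Matrix (Fin n) (Fin m) K) (Ci Cj : Matrix (Fin m) (Fin n) K)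
    (h : 2 * m ≤ (Bj * Ci - Bi * Cj).rank) :
    (∃ R : Matrix (Fin n) (Fin m) K, Ci * R = 1 ∧ Cj * R = 0) ∧
    (∃ R : Matrix (Fin n) (Fin m) K, Cj * R = 1 ∧ Ci * R = 0) := by
  have e : Bj * Ci - Bi * Cj = Matrix.fromCols Bj (-Bi) * Matrix.fromRows Ci Cj := by
    rw [Matrix.fromCols_mul_fromRows, Matrix.neg_mul, sub_eq_add_neg]
  obtain ⟨R, hR⟩ := exists_right_inverse_of_card_le_rank (Matrix.fromRows Ci Cj) (by
    rw [e] at h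
    refine le_trans ?_ (h.trans (Matrix.rank_mul_le_right _ _))
    simp [two_mul])
  rw [← Matrix.fromCols_toCols R, Matrix.fromRows_mul_fromCols, ← Matrix.fromBlocks_one,
    Matrix.fromBlocks_inj] at hR
  exact ⟨⟨R.toCols₁, hR.1, hR.2.2.1⟩, ⟨R.toCols₂, hR.2.2.2, hR.2.1⟩⟩

/-- If the images of `B_1 C_0 - B_0 C_1` and `B_2 C_0 - B_0 C_2` together span a space of
dimension at least `3m`, then `(B_0 | B_1 | B_2)` has a left inverse, given here by its row
blocks. -/
lemma exists_dual_left {K : Type*} [Field K] {n m : ℕ}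
    (B : Fin 3 → Matrix (Fin n) (Fin m) K) (C : Fin 3 → Matrix (Fin m) (Fin n) K)
    (h : 3 * m ≤ Module.finrank K ↥(LinearMap.range (B 1 * C 0 - B 0 * C 1).mulVecLin ⊔
      LinearMap.range (B 2 * C 0 - B 0 * C 2).mulVecLin)) :
    ∃ L : Fin 3 → Matrix (Fin m) (Fin n) K,
      (∀ i, L i * B i = 1) ∧ ∀ i j, i ≠ j → L i * B j = 0 := by
  set W := Matrix.fromCols (B 0) (Matrix.fromCols (B 1) (B 2)) with hW
  have hle : LinearMap.range (B 1 * C 0 - B 0 * C 1).mulVecLin ⊔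
      LinearMap.range (B 2 * C 0 - B 0 * C 2).mulVecLin ≤ LinearMap.range W.mulVecLin := by
    have e1 : B 1 * C 0 - B 0 * C 1 = W * (Matrix.fromRows (-C 1) (Matrix.fromRows (C 0) 0) :
        Matrix (Fin m ⊕ Fin m ⊕ Fin m) (Fin n) K) := by
      simp [hW, Matrix.fromCols_mul_fromRows]; abel
    have e2 : B 2 * C 0 - B 0 * C 2 = W * (Matrix.fromRows (-C 2) (Matrix.fromRows 0 (C 0)) :
        Matrix (Fin m ⊕ Fin m ⊕ Fin m) (Fin n) K) := by
      simp [hW, Matrix.fromCols_mul_fromRows]; abel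
    rw [e1, e2, Matrix.mulVecLin_mul, Matrix.mulVecLin_mul]
    exact sup_le (LinearMap.range_comp_le_range _ _) (LinearMap.range_comp_le_range _ _)
  obtain ⟨L, hL⟩ := exists_left_inverse_of_card_le_rank W (by
    refine le_trans ?_ (h.trans (Submodule.finrank_mono hle))
    simp; omega)
  rw [hW, ← Matrix.fromRows_toRows L, ← Matrix.fromRows_toRows L.toRows₂,
    Matrix.fromRows_mul_fromCols, ← Matrix.fromBlocks_one, Matrix.fromBlocks_inj,
    Matrix.fromRows_mul, Matrix.mul_fromCols, Matrix.fromRows_mul_fromCols,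
    ← Matrix.fromBlocks_one, Matrix.fromBlocks_inj, ← Matrix.fromCols_zero,
    ← Matrix.fromRows_zero, Matrix.fromCols_inj.eq_iff, Matrix.fromRows_inj.eq_iff] at hL
  obtain ⟨h00, ⟨h01, h02⟩, ⟨h10, h20⟩, h11, h12, h21, h22⟩ := hL
  refine ⟨![L.toRows₁, L.toRows₂.toRows₁, L.toRows₂.toRows₂], ?_, ?_⟩
  · intro i; fin_cases i <;> assumption
  · intro i j hij
    fin_cases i <;> fin_cases j <;> first | exact absurd rfl hij | assumption

/-- (Theorem 3.2.) Under the rank hypotheses (i) and (ii) on the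
commutators of `(A_1,A_2,A_3)`, two commuting extensions of size `r` whose top-right
blocks `B_1` and `B'_1` coincide are identical. -/
theorem commutingExtension_unique_of_topRight_eq
    (K : Type*) [Field K] (n r : ℕ) (hnr : n ≤ r)
    (A : Fin 3 → Matrix (Fin n) (Fin n) K)
    -- hypothesis (i)
    (hi12 : Module.finrank K
      ↥(LinearMap.range (A 0 * A 1 - A 1 * A 0).mulVecLin) = 2 * (r - n))
    (hi13 : Module.finrank K
      ↥(LinearMap.range (A 0 * A 2 - A 2 * A 0).mulVecLin) = 2 * (r - n))
    (hi23 : Module.finrank K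
      ↥(LinearMap.range (A 1 * A 2 - A 2 * A 1).mulVecLin) = 2 * (r - n))
    -- hypothesis (ii)
    (hii1 : Module.finrank K ↥(LinearMap.range (A 0 * A 1 - A 1 * A 0).mulVecLin ⊔
      LinearMap.range (A 0 * A 2 - A 2 * A 0).mulVecLin) = 3 * (r - n))
    (hii2 : Module.finrank K ↥(LinearMap.range (A 1 * A 0 - A 0 * A 1).mulVecLin ⊔
      LinearMap.range (A 1 * A 2 - A 2 * A 1).mulVecLin) = 3 * (r - n))
    (hii3 : Module.finrank K ↥(LinearMap.range (A 2 * A 0 - A 0 * A 2).mulVecLin ⊔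
      LinearMap.range (A 2 * A 1 - A 1 * A 2).mulVecLin) = 3 * (r - n))
    -- first commuting extension, with its blocks
    (B : Fin 3 → Matrix (Fin n) (Fin (r - n)) K)
    (C : Fin 3 → Matrix (Fin (r - n)) (Fin n) K)
    (D : Fin 3 → Matrix (Fin (r - n)) (Fin (r - n)) K)
    (Z : Fin 3 → Matrix (Fin n ⊕ Fin (r - n)) (Fin n ⊕ Fin (r - n)) K)
    (hZblock : ∀ i, Z i = Matrix.fromBlocks (A i) (B i) (C i) (D i))
    (hZcomm : ∀ i j, Z i * Z j = Z j * Z i)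
    -- second commuting extension, with its blocks
    (B' : Fin 3 → Matrix (Fin n) (Fin (r - n)) K)
    (C' : Fin 3 → Matrix (Fin (r - n)) (Fin n) K)
    (D' : Fin 3 → Matrix (Fin (r - n)) (Fin (r - n)) K)
    (Z' : Fin 3 → Matrix (Fin n ⊕ Fin (r - n)) (Fin n ⊕ Fin (r - n)) K)
    (hZ'block : ∀ i, Z' i = Matrix.fromBlocks (A i) (B' i) (C' i) (D' i))
    (hZ'comm : ∀ i j, Z' i * Z' j = Z' j * Z' i)
    -- equal top-right first blocks
    (hB1 : B 0 = B' 0) :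
    ∀ i, Z i = Z' i := by
  have top : ∀ (B : Fin 3 → Matrix (Fin n) (Fin (r - n)) K)
      (C : Fin 3 → Matrix (Fin (r - n)) (Fin n) K)
      (D : Fin 3 → Matrix (Fin (r - n)) (Fin (r - n)) K)
      (Z : Fin 3 → Matrix (Fin n ⊕ Fin (r - n)) (Fin n ⊕ Fin (r - n)) K),
      (∀ i, Z i = Matrix.fromBlocks (A i) (B i) (C i) (D i)) → (∀ i j, Z i * Z j = Z j * Z i) →
      ∀ i j, A i * A j - A j * A i = B j * C i - B i * C j ∧
        A i * B j + B i * D j = A j * B i + B j * D i := by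
    intro B C D Z hb hc i j
    have h := hc i j
    rw [hb, hb, Matrix.fromBlocks_multiply, Matrix.fromBlocks_multiply,
      Matrix.fromBlocks_inj] at h
    refine ⟨?_, h.2.1⟩
    rw [sub_eq_sub_iff_add_eq_add, h.1]
    abel
  have t := top B C D Z hZblock hZcomm
  have t' := top B' C' D' Z' hZ'block hZ'comm
  have dualR : ∀ (B : Fin 3 → Matrix (Fin n) (Fin (r - n)) K)
      (C : Fin 3 → Matrix (Fin (r - n)) (Fin n) K),
      (∀ i j, A i * A j - A j * A i = B j * C i - B i * C j) →
      ∀ i j, i ≠ j → ∃ R : Matrix (Fin n) (Fin (r - n)) K, C i * R = 1 ∧ C j * R = 0 := by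
    intro B C hBC
    have h01 := exists_dual_right (B 0) (B 1) (C 0) (C 1) (by rw [← hBC]; exact hi12.ge)
    have h02 := exists_dual_right (B 0) (B 2) (C 0) (C 2) (by rw [← hBC]; exact hi13.ge)
    have h12 := exists_dual_right (B 1) (B 2) (C 1) (C 2) (by rw [← hBC]; exact hi23.ge)
    intro i j hij
    fin_cases i <;> fin_cases j <;>
      first
      | exact absurd rfl hij
      | exact h01.1
      | exact h01.2
      | exact h02.1
      | exact h02.2
      | exact h12.1
      | exact h12.2
  have dR := dualR B C fun i j => (t i j).1
  have dR' := dualR B' C' fun i j => (t' i j).1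
  obtain ⟨L, hL1, hL0⟩ := exists_dual_left B C (by
    rw [← (t 0 1).1, ← (t 0 2).1]; exact hii1.ge)
  have comm : ∀ i j, B j * C i - B i * C j = B' j * C' i - B' i * C' j := fun i j => by
    rw [← (t i j).1, ← (t' i j).1]
  have hB' : ∀ i j, i ≠ j → ∃ X Y : Matrix (Fin (r - n)) (Fin (r - n)) K,
      B' j = B j * X - B i * Y := by
    intro i j hij
    obtain ⟨R, h1, h0⟩ := dR' i j hij
    refine ⟨C i * R, C j * R, ?_⟩
    rw [← Matrix.mul_assoc, ← Matrix.mul_assoc, ← Matrix.sub_mul, comm, Matrix.sub_mul,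
      Matrix.mul_assoc, Matrix.mul_assoc, h1, h0, Matrix.mul_one, Matrix.mul_zero, sub_zero]
  have hLB' : ∀ i j, i ≠ j → L i * B' j = 0 := by
    intro i j hij
    -- the image of `B' j` lies in `Im B j + Im B k` for the third index `k`, which `L i` kills
    obtain ⟨k, hki, hkj⟩ : ∃ k : Fin 3, i ≠ k ∧ k ≠ j := by revert i j; decide
    obtain ⟨X, Y, e⟩ := hB' k j hkj
    rw [e, Matrix.mul_sub, ← Matrix.mul_assoc, ← Matrix.mul_assoc, hL0 i j hij, hL0 i k hki]
    simp
  have hP : ∀ j, B' j = B j * (L j * B' j) := by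
    intro j
    obtain ⟨i, hij⟩ : ∃ i : Fin 3, i ≠ j := exists_ne j
    obtain ⟨X, Y, e⟩ := hB' i j hij
    have hY := hLB' i j hij
    rw [e, Matrix.mul_sub, ← Matrix.mul_assoc, ← Matrix.mul_assoc, hL0 i j hij, hL1 i] at hY
    have hY0 : Y = 0 := by simpa using hY
    rw [hY0, Matrix.mul_zero, sub_zero] at e
    rw [e, ← Matrix.mul_assoc (L j), hL1, Matrix.one_mul]
  have hC : ∀ i j, i ≠ j → C i = L j * B' j * C' i := by
    intro i j hij
    have h := congrArg (L j * ·) (comm i j)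
    simpa only [Matrix.mul_sub, ← Matrix.mul_assoc, hL1, hL0 j i hij.symm, hLB' j i hij.symm,
      Matrix.one_mul, Matrix.zero_mul, sub_zero] using h
  have hC0 : ∀ i, i ≠ 0 → C i = C' i := by
    intro i hi
    rw [hC i 0 hi, ← hB1, hL1, Matrix.one_mul]
  have hP1 : ∀ j, L j * B' j = 1 := by
    intro j
    obtain ⟨i, hij, hi⟩ : ∃ i : Fin 3, i ≠ j ∧ i ≠ 0 := by revert j; decide
    obtain ⟨R, h1, -⟩ := dR i j hij
    have h := congrArg (· * R) (hC i j hij)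
    simp only [← hC0 i hi, Matrix.mul_assoc _ (C i) R, h1, Matrix.mul_one] at h
    exact h.symm
  have hBB : ∀ j, B j = B' j := fun j => by rw [hP j, hP1, Matrix.mul_one]
  have hCC : ∀ i, C i = C' i := fun i => by
    obtain ⟨j, hj⟩ := exists_ne i
    rw [hC i j hj.symm, hP1, Matrix.one_mul]
  have hDD : ∀ j, D j = D' j := by
    intro j
    obtain ⟨i, hij⟩ := exists_ne j
    have h := (t i j).2
    have h' := (t' i j).2
    rw [← hBB, ← hBB] at h'
    have e : B i * (D j - D' j) = B j * (D i - D' i) := by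
      rw [Matrix.mul_sub, Matrix.mul_sub, sub_eq_sub_iff_add_eq_add]
      have := congrArg₂ (· - ·) h h'
      simp only [add_sub_add_left_eq_sub] at this
      rwa [sub_eq_sub_iff_add_eq_add] at this
    have e' := congrArg (L i * ·) e
    simp only [← Matrix.mul_assoc, hL1, hL0 i j hij, Matrix.one_mul, Matrix.zero_mul] at e'
    exact sub_eq_zero.1 e'
  intro i
  rw [hZblock, hZ'block, hBB, hCC, hDD]
end

section
/- Let K be a field, n ≤ r, p ≥ 3, and let (A_1,…,A_p) be n×n matrices over K. Suppose that for every l with 2 ≤ l ≤ p there exists m ∉ {1,l} such that hypothesis (H_{1lm}) holds. If (Z_1,…,Z_p) and (Z'_1,…,Z'_p) are two commuting extensions of (A_1,…,A_p) of size r, then there exists an invertible matrix M ∈ GL_{r−n}(K) such that Z'_i = ρ_M(Z_i) for all i = 1,…,p. -/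
/-!
Write `Z i = [[A i, B i], [C i, D i]]` and `s = r - n`. Commutation of `Z i` with `Z j` says, in its
upper left block, that `[A i, A j] = B j * C i - B i * C j`, a product of an `n × 2s` and a
`2s × n` matrix. If it has rank `2s`, both factors have full rank (`exists_factor_inverses`): the
`C`'s have right inverses and `Im [A i, A j] = Im (B i) ⊕ Im (B j)`.

Under `(H_{klm})` the column spaces of `B k`, `B l`, `B m` are moreover independent
(`exists_dual_family`), so `Im (B k) = Im [A k, A l] ∩ Im [A k, A m]` depends on the `A`'s alone,
and likewise for `l` and `m`. For two extensions this gives `B' i = B i * M i` for each of the three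
indices; comparing the two expressions of the three commutators forces `M k = M l = M m = M`,
together with `C i = M * C' i`. The upper right blocks of the commutation relations then give
`D i * M = M * D' i` (`exists_conj_of_hypH`).

Finally, `B 0` has a left inverse, so `B' 0 = B 0 * M` determines `M`, and the matrices `M` obtained
from the various triples `(0, l, m)` coincide.
-/

open Matrix

/-- Hypothesis `(H_{klm})` from the paper: for the triple `(A_k, A_l, A_m)`,
(i) `Im [A_k,A_l]`, `Im [A_k,A_m]`, `Im [A_l,A_m]` each have dimension `2(r−n)`, and
(ii) `Im [A_k,A_l]+Im [A_k,A_m]`, `Im [A_l,A_k]+Im [A_l,A_m]`, `Im [A_m,A_k]+Im [A_m,A_l]`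
each have dimension `3(r−n)`. -/
def HypH {K : Type*} [Field K] {n : ℕ} (r : ℕ) {p : ℕ}
    (A : Fin p → Matrix (Fin n) (Fin n) K) (k l m : Fin p) : Prop :=
  (Module.finrank K ↥(LinearMap.range (A k * A l - A l * A k).mulVecLin) = 2 * (r - n)) ∧
  (Module.finrank K ↥(LinearMap.range (A k * A m - A m * A k).mulVecLin) = 2 * (r - n)) ∧
  (Module.finrank K ↥(LinearMap.range (A l * A m - A m * A l).mulVecLin) = 2 * (r - n)) ∧
  (Module.finrank K ↥(LinearMap.range (A k * A l - A l * A k).mulVecLin ⊔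
    LinearMap.range (A k * A m - A m * A k).mulVecLin) = 3 * (r - n)) ∧
  (Module.finrank K ↥(LinearMap.range (A l * A k - A k * A l).mulVecLin ⊔
    LinearMap.range (A l * A m - A m * A l).mulVecLin) = 3 * (r - n)) ∧
  (Module.finrank K ↥(LinearMap.range (A m * A k - A k * A m).mulVecLin ⊔
    LinearMap.range (A m * A l - A l * A m).mulVecLin) = 3 * (r - n))

section FullRank

variable {K : Type*} [Field K]

theorem exists_left_inv_of_rank {m ι : Type*} [Fintype m] [DecidableEq m] [Fintype ι]
    [DecidableEq ι] (P : Matrix m ι K) (h : Fintype.card ι ≤ P.rank) :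
    ∃ L : Matrix ι m K, L * P = 1 := by
  have hinj : LinearMap.ker P.mulVecLin = ⊥ := by
    have h1 := LinearMap.finrank_range_add_finrank_ker P.mulVecLin
    rw [Module.finrank_fintype_fun_eq_card] at h1
    have h2 : P.rank = Module.finrank K (LinearMap.range P.mulVecLin) := rfl
    exact Submodule.finrank_eq_zero.mp (by omega)
  obtain ⟨g, hg⟩ := LinearMap.exists_leftInverse_of_injective _ hinj
  refine ⟨LinearMap.toMatrix' g, ?_⟩
  have := congrArg LinearMap.toMatrix' hg
  rwa [LinearMap.toMatrix'_comp, LinearMap.toMatrix'_id, ← Matrix.toLin'_apply',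
    LinearMap.toMatrix'_toLin'] at this

theorem exists_right_inv_of_rank {m ι : Type*} [Fintype m] [DecidableEq m] [Fintype ι]
    [DecidableEq ι] (Q : Matrix ι m K) (h : Fintype.card ι ≤ Q.rank) :
    ∃ R : Matrix m ι K, Q * R = 1 := by
  obtain ⟨L, hL⟩ := exists_left_inv_of_rank Qᵀ (by rwa [Matrix.rank_transpose])
  refine ⟨Lᵀ, ?_⟩
  rw [← Matrix.transpose_inj, Matrix.transpose_mul, Matrix.transpose_transpose, hL,
    Matrix.transpose_one]

/-- If `E = B₁ * C₁ - B₂ * C₂` has the largest rank `2s` that this factorization allows, then the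
columns of `B₁` and `B₂` lie in the column space of `E`, and `C₁` and `C₂` have right inverses. -/
theorem exists_factor_inverses {n s : ℕ} {E : Matrix (Fin n) (Fin n) K}
    {B₁ B₂ : Matrix (Fin n) (Fin s) K} {C₁ C₂ : Matrix (Fin s) (Fin n) K}
    (hE : E = B₁ * C₁ - B₂ * C₂) (h : E.rank = 2 * s) :
    (∃ X : Matrix (Fin n) (Fin s) K, E * X = B₁) ∧ (∃ X : Matrix (Fin n) (Fin s) K, E * X = B₂) ∧
      (∃ R : Matrix (Fin n) (Fin s) K, C₁ * R = 1) ∧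
      (∃ R : Matrix (Fin n) (Fin s) K, C₂ * R = 1) := by
  have hPQ : E = fromCols B₁ (-B₂) * fromRows C₁ C₂ := by
    rw [fromCols_mul_fromRows, hE, Matrix.neg_mul, sub_eq_add_neg]
  obtain ⟨R, hR⟩ := exists_right_inv_of_rank (fromRows C₁ C₂) (by
    have := Matrix.rank_mul_le_right (fromCols B₁ (-B₂)) (fromRows C₁ C₂)
    rw [← hPQ, h] at this
    simpa [two_mul] using this)
  have hR' := hR
  rw [← fromCols_toCols R, fromRows_mul_fromCols, ← fromBlocks_one, fromBlocks_inj] at hR'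
  obtain ⟨h11, h12, h21, h22⟩ := hR'
  refine ⟨⟨R.toCols₁, ?_⟩, ⟨-R.toCols₂, ?_⟩, ⟨_, h11⟩, ⟨_, h22⟩⟩
  · rw [hE, Matrix.sub_mul, Matrix.mul_assoc, Matrix.mul_assoc, h11, h21]; simp
  · rw [hE, Matrix.sub_mul, Matrix.mul_assoc, Matrix.mul_assoc, Matrix.mul_neg, Matrix.mul_neg,
      Matrix.mul_neg, h12, h22]; simp

/-- If the column spaces of `B₁`, `B₂`, `B₃` (each with `s` columns) together contain a subspace
of dimension `3s`, then the `3s` columns are linearly independent; this is expressed by a dual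
family of left inverses. -/
theorem exists_dual_family {n s : ℕ} {B₁ B₂ B₃ : Matrix (Fin n) (Fin s) K}
    {E F : Matrix (Fin n) (Fin n) K} {C₁ C₂ C₃ C₄ : Matrix (Fin s) (Fin n) K}
    (hE : E = B₂ * C₁ - B₁ * C₂) (hF : F = B₃ * C₃ - B₁ * C₄)
    (h : Module.finrank K ↥(LinearMap.range E.mulVecLin ⊔ LinearMap.range F.mulVecLin) = 3 * s) :
    ∃ L₁ L₂ L₃ : Matrix (Fin s) (Fin n) K,
      (L₁ * B₁ = 1 ∧ L₁ * B₂ = 0 ∧ L₁ * B₃ = 0) ∧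
      (L₂ * B₁ = 0 ∧ L₂ * B₂ = 1 ∧ L₂ * B₃ = 0) ∧
      (L₃ * B₁ = 0 ∧ L₃ * B₂ = 0 ∧ L₃ * B₃ = 1) := by
  set P := fromCols (fromCols B₁ B₂) B₃ with hP
  have hE' : E = P * fromRows (fromRows (-C₂) C₁) (0 : Matrix (Fin s) (Fin n) K) := by
    rw [hP, fromCols_mul_fromRows, fromCols_mul_fromRows, hE, Matrix.mul_neg, Matrix.mul_zero]
    abel
  have hF' : F = P * fromRows (fromRows (-C₄) (0 : Matrix (Fin s) (Fin n) K)) C₃ := by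
    rw [hP, fromCols_mul_fromRows, fromCols_mul_fromRows, hF, Matrix.mul_neg, Matrix.mul_zero]
    abel
  have hle : LinearMap.range E.mulVecLin ⊔ LinearMap.range F.mulVecLin
      ≤ LinearMap.range P.mulVecLin := by
    refine sup_le ?_ ?_
    · rw [hE', Matrix.mulVecLin_mul]; exact LinearMap.range_comp_le_range _ _
    · rw [hF', Matrix.mulVecLin_mul]; exact LinearMap.range_comp_le_range _ _
  obtain ⟨L, hL⟩ := exists_left_inv_of_rank P (by
    have h1 := Submodule.finrank_mono hle
    have h2 : P.rank = Module.finrank K (LinearMap.range P.mulVecLin) := rfl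
    rw [h] at h1
    simp only [Fintype.card_sum, Fintype.card_fin]
    omega)
  refine ⟨L.submatrix (Sum.inl ∘ Sum.inl) id, L.submatrix (Sum.inl ∘ Sum.inr) id,
    L.submatrix Sum.inr id, ⟨?_, ?_, ?_⟩, ⟨?_, ?_, ?_⟩, ?_, ?_, ?_⟩ <;> ext i j
  · simpa [hP, mul_apply, one_apply] using congrFun₂ hL (.inl (.inl i)) (.inl (.inl j))
  · simpa [hP, mul_apply, one_apply] using congrFun₂ hL (.inl (.inl i)) (.inl (.inr j))
  · simpa [hP, mul_apply, one_apply] using congrFun₂ hL (.inl (.inl i)) (.inr j)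
  · simpa [hP, mul_apply, one_apply] using congrFun₂ hL (.inl (.inr i)) (.inl (.inl j))
  · simpa [hP, mul_apply, one_apply] using congrFun₂ hL (.inl (.inr i)) (.inl (.inr j))
  · simpa [hP, mul_apply, one_apply] using congrFun₂ hL (.inl (.inr i)) (.inr j)
  · simpa [hP, mul_apply, one_apply] using congrFun₂ hL (.inr i) (.inl (.inl j))
  · simpa [hP, mul_apply, one_apply] using congrFun₂ hL (.inr i) (.inl (.inr j))
  · simpa [hP, mul_apply, one_apply] using congrFun₂ hL (.inr i) (.inr j)

end FullRank

section Uniqueness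

variable {K : Type*} [Field K]

theorem coeff_eq_of_dual {n s t : ℕ} {B₁ B₂ : Matrix (Fin n) (Fin s) K}
    {L₁ L₂ : Matrix (Fin s) (Fin n) K} {X X' Y Y' : Matrix (Fin s) (Fin t) K}
    (h11 : L₁ * B₁ = 1) (h12 : L₁ * B₂ = 0) (h21 : L₂ * B₁ = 0) (h22 : L₂ * B₂ = 1)
    (h : B₁ * X - B₂ * Y = B₁ * X' - B₂ * Y') : X = X' ∧ Y = Y' := by
  have h1 := congrArg (L₁ * ·) h
  have h2 := congrArg (L₂ * ·) h
  simp only [Matrix.mul_sub, ← Matrix.mul_assoc, h11, h12, h21, h22, Matrix.one_mul,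
    Matrix.zero_mul, sub_zero, zero_sub, neg_inj] at h1 h2
  exact ⟨h1, h2⟩

/-- A matrix `B'` whose columns lie in `Im B₁ + Im B₂` and in `Im B₁ + Im B₃` has its columns in
`Im B₁`, when `B₂` is injective with image independent of `Im B₁ + Im B₃` (as witnessed by `L`).
The two sums enter as the images of factored matrices `E` and `F`. -/
theorem exists_factor_of_mem_inter {n s : ℕ} {B₁ B₂ B₃ B' : Matrix (Fin n) (Fin s) K}
    {E F : Matrix (Fin n) (Fin n) K} {C₁ C₂ C₃ C₄ L : Matrix (Fin s) (Fin n) K}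
    (h1 : L * B₁ = 0) (h2 : L * B₂ = 1) (h3 : L * B₃ = 0)
    (hE : E = B₁ * C₁ - B₂ * C₂) (hF : F = B₁ * C₃ - B₃ * C₄)
    (hE' : ∃ X : Matrix (Fin n) (Fin s) K, E * X = B')
    (hF' : ∃ Y : Matrix (Fin n) (Fin s) K, F * Y = B') :
    ∃ M : Matrix (Fin s) (Fin s) K, B' = B₁ * M := by
  obtain ⟨X, hX⟩ := hE'
  obtain ⟨Y, hY⟩ := hF'
  have e1 : L * B' = -(C₂ * X) := by
    rw [← hX, hE, ← Matrix.mul_assoc, Matrix.mul_sub, ← Matrix.mul_assoc, ← Matrix.mul_assoc,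
      h1, h2]
    simp
  have e2 : L * B' = 0 := by
    rw [← hY, hF, ← Matrix.mul_assoc, Matrix.mul_sub, ← Matrix.mul_assoc, ← Matrix.mul_assoc,
      h1, h3]
    simp
  have e3 : C₂ * X = 0 := by rw [← neg_eq_zero, ← e1, e2]
  refine ⟨C₁ * X, ?_⟩
  rw [← hX, hE, Matrix.sub_mul, Matrix.mul_assoc, Matrix.mul_assoc, e3]
  simp

/-- The uniqueness statement for a single triple `(k, l, m)`, in terms of the blocks of the two
extensions. The commutation relations enter through their upper left (`h1`, `h1'`) and upper right
(`h2`, `h2'`) blocks. The left inverse `L` of `B k` is recorded because it makes `M` unique. -/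
theorem exists_conj_of_hypH {n r p : ℕ} {A : Fin p → Matrix (Fin n) (Fin n) K}
    {B B' : Fin p → Matrix (Fin n) (Fin (r - n)) K} {C C' : Fin p → Matrix (Fin (r - n)) (Fin n) K}
    {D D' : Fin p → Matrix (Fin (r - n)) (Fin (r - n)) K}
    (h1 : ∀ i j, A i * A j - A j * A i = B j * C i - B i * C j)
    (h1' : ∀ i j, A i * A j - A j * A i = B' j * C' i - B' i * C' j)
    (h2 : ∀ i j, A i * B j + B i * D j = A j * B i + B j * D i)
    (h2' : ∀ i j, A i * B' j + B' i * D' j = A j * B' i + B' j * D' i)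
    {k l m : Fin p} (H : HypH r A k l m) :
    ∃ (M N : Matrix (Fin (r - n)) (Fin (r - n)) K) (L : Matrix (Fin (r - n)) (Fin n) K),
      M * N = 1 ∧ L * B k = 1 ∧
      (B' k = B k * M ∧ C k = M * C' k ∧ D k * M = M * D' k) ∧
      (B' l = B l * M ∧ C l = M * C' l ∧ D l * M = M * D' l) := by
  obtain ⟨rkl, rkm, rlm, rk, -, -⟩ := H
  obtain ⟨Lk, Ll, Lm, ⟨kk, kl, km⟩, ⟨lk, ll, lm⟩, ⟨mk, ml, mm⟩⟩ :=
    exists_dual_family (h1 k l) (h1 k m) rk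
  obtain ⟨hl1, hk1, -, -⟩ := exists_factor_inverses (h1' k l) rkl
  obtain ⟨hm1, hk2, ⟨Rk, hRk⟩, -⟩ := exists_factor_inverses (h1' k m) rkm
  obtain ⟨hm2, hl2, ⟨Rl, hRl⟩, -⟩ := exists_factor_inverses (h1' l m) rlm
  obtain ⟨-, -, ⟨Sk, hSk⟩, -⟩ := exists_factor_inverses (h1 k l) rkl
  -- Each `Im (B' i)` lies in `Im (B i)`, the intersection of the images of two commutators.
  obtain ⟨Mk, hMk⟩ := exists_factor_of_mem_inter (B₁ := B k) (B₂ := B l) (B₃ := B m)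
    (B' := B' k) (E := A k * A l - A l * A k) (F := A k * A m - A m * A k)
    (C₁ := -C l) (C₂ := -C k) (C₃ := -C m) (C₄ := -C k) lk ll lm
    (by rw [h1 k l, Matrix.mul_neg, Matrix.mul_neg]; abel)
    (by rw [h1 k m, Matrix.mul_neg, Matrix.mul_neg]; abel) hk1 hk2
  obtain ⟨Ml, hMl⟩ := exists_factor_of_mem_inter (B₁ := B l) (B₂ := B k) (B₃ := B m)
    (B' := B' l) (E := A k * A l - A l * A k) (F := A l * A m - A m * A l)
    (C₁ := C k) (C₂ := C l) (C₃ := -C m) (C₄ := -C l) kl kk km (h1 k l)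
    (by rw [h1 l m, Matrix.mul_neg, Matrix.mul_neg]; abel) hl1 hl2
  obtain ⟨Mm, hMm⟩ := exists_factor_of_mem_inter (B₁ := B m) (B₂ := B k) (B₃ := B l)
    (B' := B' m) km kk kl (h1 k m) (h1 l m) hm1 hm2
  -- Compare the two factorizations of each commutator.
  have ekl := (h1 k l).symm.trans (h1' k l)
  have ekm := (h1 k m).symm.trans (h1' k m)
  have elm := (h1 l m).symm.trans (h1' l m)
  rw [hMk, hMl, Matrix.mul_assoc, Matrix.mul_assoc] at ekl
  rw [hMk, hMm, Matrix.mul_assoc, Matrix.mul_assoc] at ekm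
  rw [hMl, hMm, Matrix.mul_assoc, Matrix.mul_assoc] at elm
  obtain ⟨c1, c2⟩ := coeff_eq_of_dual ll lk kl kk ekl
  obtain ⟨c3, -⟩ := coeff_eq_of_dual mm mk km kk ekm
  obtain ⟨c4, -⟩ := coeff_eq_of_dual mm ml lm ll elm
  have hlm : Ml = Mm := by
    have := congrArg (· * Rk) (c1.symm.trans c3)
    simpa [Matrix.mul_assoc, hRk] using this
  have hkm : Mk = Mm := by
    have := congrArg (· * Rl) (c2.symm.trans c4)
    simpa [Matrix.mul_assoc, hRl] using this
  rw [hlm] at hMl c1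
  rw [hkm] at hMk c2
  have d : B l * (D k * Mm) - B k * (D l * Mm) = B l * (Mm * D' k) - B k * (Mm * D' l) := by
    have e := congrArg (· * Mm) (h2 k l)
    have e' := h2' k l
    rw [hMk, hMl] at e'
    simp only [Matrix.add_mul, Matrix.mul_assoc] at e e'
    rw [sub_eq_sub_iff_add_eq_add]
    rw [← sub_eq_zero] at e e' ⊢
    rw [← sub_eq_zero.mpr (e'.trans e.symm)]
    abel
  obtain ⟨dk, dl⟩ := coeff_eq_of_dual ll lk kl kk d
  exact ⟨Mm, C' k * Sk, Lk, by rw [← Matrix.mul_assoc, ← c1, hSk], kk, ⟨hMk, c1, dk⟩,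
    ⟨hMl, c2, dl⟩⟩

theorem block_relations_s11 {n s p : ℕ} {A : Fin p → Matrix (Fin n) (Fin n) K}
    {B : Fin p → Matrix (Fin n) (Fin s) K} {C : Fin p → Matrix (Fin s) (Fin n) K}
    {D : Fin p → Matrix (Fin s) (Fin s) K}
    {Z : Fin p → Matrix (Fin n ⊕ Fin s) (Fin n ⊕ Fin s) K}
    (hZ : ∀ i j, Z i * Z j = Z j * Z i) (hb : ∀ i, Z i = fromBlocks (A i) (B i) (C i) (D i)) :
    (∀ i j, A i * A j - A j * A i = B j * C i - B i * C j) ∧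
      (∀ i j, A i * B j + B i * D j = A j * B i + B j * D i) := by
  have key : ∀ i j, A i * A j + B i * C j = A j * A i + B j * C i ∧
      A i * B j + B i * D j = A j * B i + B j * D i := by
    intro i j
    have h := hZ i j
    rw [hb i, hb j, fromBlocks_multiply, fromBlocks_multiply, fromBlocks_inj] at h
    exact ⟨h.1, h.2.1⟩
  refine ⟨fun i j => ?_, fun i j => (key i j).2⟩
  rw [sub_eq_sub_iff_add_eq_add, (key i j).1, add_comm]

end Uniqueness

/-- (Theorem 3.6.) Let `p ≥ 3` and suppose that for every index
`l ≠ 1` there is some `m ∉ {1, l}` such that `(H_{1lm})` holds (here the first index is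
`0` in `Fin p`). Then any two commuting extensions of `(A_1,…,A_p)` of size `r` are
conjugate by the `GL_{r−n}` action `ρ_M`. -/
theorem commutingExtension_essentially_unique_of_many
    (K : Type*) [Field K] (n r p : ℕ) (hnr : n ≤ r) (hp : 3 ≤ p)
    (A : Fin p → Matrix (Fin n) (Fin n) K)
    (hH : ∀ l : Fin p, l ≠ ⟨0, by omega⟩ → ∃ m : Fin p, m ≠ ⟨0, by omega⟩ ∧ m ≠ l ∧ HypH r A ⟨0, by omega⟩ l m)
    (Z Z' : Fin p → Matrix (Fin n ⊕ Fin (r - n)) (Fin n ⊕ Fin (r - n)) K)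
    (hZcomm : ∀ i j, Z i * Z j = Z j * Z i)
    (hZblock : ∀ i, ∃ (B : Matrix (Fin n) (Fin (r - n)) K)
        (C : Matrix (Fin (r - n)) (Fin n) K) (D : Matrix (Fin (r - n)) (Fin (r - n)) K),
        Z i = Matrix.fromBlocks (A i) B C D)
    (hZ'comm : ∀ i j, Z' i * Z' j = Z' j * Z' i)
    (hZ'block : ∀ i, ∃ (B : Matrix (Fin n) (Fin (r - n)) K)
        (C : Matrix (Fin (r - n)) (Fin n) K) (D : Matrix (Fin (r - n)) (Fin (r - n)) K),
        Z' i = Matrix.fromBlocks (A i) B C D) :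
    ∃ M : GL (Fin (r - n)) K, ∀ i,
      Z' i = Matrix.fromBlocks (1 : Matrix (Fin n) (Fin n) K) 0 0
          (↑(M⁻¹) : Matrix (Fin (r - n)) (Fin (r - n)) K) * Z i *
        Matrix.fromBlocks (1 : Matrix (Fin n) (Fin n) K) 0 0
          (↑M : Matrix (Fin (r - n)) (Fin (r - n)) K) := by
  choose B C D hZ using hZblock
  choose B' C' D' hZ' using hZ'block
  obtain ⟨h1, h2⟩ := block_relations_s11 hZcomm hZ
  obtain ⟨h1', h2'⟩ := block_relations_s11 hZ'comm hZ'
  obtain ⟨m, -, -, H⟩ := hH ⟨1, by omega⟩ (by simp)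
  obtain ⟨M, N, L, hMN, hL, h0, -⟩ := exists_conj_of_hypH h1 h1' h2 h2' H
  have hNM : N * M = 1 := mul_eq_one_comm.mp hMN
  have all : ∀ i, B' i = B i * M ∧ C i = M * C' i ∧ D i * M = M * D' i := by
    intro i
    by_cases hi : i = ⟨0, by omega⟩
    · rw [hi]; exact h0
    · obtain ⟨_, -, -, H₁⟩ := hH i hi
      obtain ⟨M₁, -, -, -, -, g0, g1⟩ := exists_conj_of_hypH h1 h1' h2 h2' H₁
      have hM : M₁ = M := by
        -- `B 0` has a left inverse, so `B 0 * M₁ = B 0 * M` can be cancelled.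
        have := congrArg (L * ·) (g0.1.symm.trans h0.1)
        simpa [← Matrix.mul_assoc, hL] using this
      rwa [hM] at g1
  refine ⟨⟨M, N, hMN, hNM⟩, fun i => ?_⟩
  obtain ⟨hB, hC, hD⟩ := all i
  change Z' i = fromBlocks 1 0 0 N * Z i * fromBlocks 1 0 0 M
  rw [hZ i, hZ' i, fromBlocks_multiply, fromBlocks_multiply, fromBlocks_inj]
  refine ⟨by simp, by simpa using hB, ?_, ?_⟩
  · rw [hC, ← Matrix.mul_assoc, hNM]; simp
  · simp only [Matrix.zero_mul, Matrix.mul_zero, zero_add]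
    rw [Matrix.mul_assoc, hD, ← Matrix.mul_assoc, hNM, Matrix.one_mul]
end

section
/- Let K be an infinite field and n ≤ r with 2r ≤ 3n. Then there exist an invertible matrix R ∈ GL_r(K) and two diagonal r×r matrices D_1, D_2 over K such that, writing Z_i = R^{-1} D_i R in block form Z_i = [[A_i, B_i],[C_i, D'_i]] with A_i of size n×n and B_i of size n×(r−n), the two matrices B_1, B_2 have rank r−n and Im B_1 ∩ Im B_2 = {0}. -/
open Matrix

/-!
Put `m = r - n`, so that `2 * m ≤ n` and there are two injections `f, g : Fin m → Fin n` with
disjoint ranges. Let `E_f` be the 0-1 matrix of the map `e_j ↦ e_{f j}`, and likewise `E_g`, and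
take `R = [[1, E_f + E_g], [0, 1]]`. For `D = diag(a, 0)` the top-right block of `R⁻¹ D R` is
`diag(a) (E_f + E_g)`. Taking for `a` the indicator of the range of `f`, resp. of `g`, turns this
block into `E_f`, resp. `E_g`: two injective matrices whose images are spanned by disjoint sets of
basis vectors. The construction works over every field.
-/

/-- The matrix of the linear map sending the basis vector `e_j` to `e_{f j}`. -/
def funMatrix (K : Type*) [Field K] {m n : ℕ} (f : Fin m → Fin n) : Matrix (Fin n) (Fin m) K :=
  Matrix.of fun i j => if i = f j then 1 else 0

section
variable {K : Type*} [Field K] {m n : ℕ}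

theorem funMatrix_mulVec_apply {f : Fin m → Fin n} (hf : Function.Injective f) (x : Fin m → K)
    (j : Fin m) : (funMatrix K f *ᵥ x) (f j) = x j := by
  simp [funMatrix, Matrix.mulVec, dotProduct, hf.eq_iff]

theorem funMatrix_mulVec_of_notMem {f : Fin m → Fin n} (x : Fin m → K) (i : Fin n)
    (hi : ∀ j, i ≠ f j) : (funMatrix K f *ᵥ x) i = 0 := by
  simp [funMatrix, Matrix.mulVec, dotProduct, hi]

theorem rank_funMatrix {f : Fin m → Fin n} (hf : Function.Injective f) :
    (funMatrix K f).rank = m := by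
  have hinj : Function.Injective (funMatrix K f).mulVecLin := by
    intro x y hxy
    funext j
    rw [← funMatrix_mulVec_apply hf x j, ← funMatrix_mulVec_apply hf y j]
    exact congrFun hxy (f j)
  rw [Matrix.rank, LinearMap.finrank_range_of_inj hinj, Module.finrank_fin_fun]

theorem range_funMatrix_inf {f g : Fin m → Fin n} (hfg : ∀ j k, f j ≠ g k) :
    LinearMap.range (funMatrix K f).mulVecLin ⊓ LinearMap.range (funMatrix K g).mulVecLin = ⊥ := by
  rw [eq_bot_iff]
  rintro v ⟨⟨x, rfl⟩, ⟨y, hy⟩⟩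
  rw [Submodule.mem_bot]
  funext i
  by_cases hi : ∃ j, i = f j
  · obtain ⟨j, rfl⟩ := hi
    rw [← hy]
    exact funMatrix_mulVec_of_notMem y _ (hfg j)
  · push Not at hi
    exact funMatrix_mulVec_of_notMem x i hi

/-- Scaling the rows by the indicator of the range of `f` keeps `E_f` and kills `E_g`. -/
theorem diagonal_mul_funMatrix_add {f g : Fin m → Fin n} (hfg : ∀ j k, f j ≠ g k) :
    Matrix.diagonal ((Set.range f).indicator (1 : Fin n → K)) * (funMatrix K f + funMatrix K g) =
      funMatrix K f := by
  ext i j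
  rw [Matrix.diagonal_mul, Matrix.add_apply]
  by_cases hi : i ∈ Set.range f
  · obtain ⟨k, rfl⟩ := hi
    simp [funMatrix, hfg]
  · have h : i ≠ f j := fun h => hi ⟨j, h.symm⟩
    simp [funMatrix, Set.indicator_of_notMem hi, h]

/-- The unipotent matrix `[[1, E], [0, 1]]` as a unit. -/
def unipotentUnit (E : Matrix (Fin n) (Fin m) K) :
    (Matrix (Fin n ⊕ Fin m) (Fin n ⊕ Fin m) K)ˣ where
  val := Matrix.fromBlocks 1 E 0 1
  inv := Matrix.fromBlocks 1 (-E) 0 1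
  val_inv := by simp [Matrix.fromBlocks_multiply]
  inv_val := by simp [Matrix.fromBlocks_multiply]

theorem toBlocks₁₂_conj_unipotentUnit (E : Matrix (Fin n) (Fin m) K) (a : Fin n → K) :
    (((unipotentUnit E)⁻¹).val * Matrix.diagonal (Sum.elim a 0) *
      (unipotentUnit E).val).toBlocks₁₂ = Matrix.diagonal a * E := by
  change (Matrix.fromBlocks 1 (-E) 0 1 * Matrix.diagonal (Sum.elim a 0) *
    Matrix.fromBlocks 1 E 0 1).toBlocks₁₂ = _
  rw [← Matrix.fromBlocks_diagonal, Matrix.fromBlocks_multiply, Matrix.fromBlocks_multiply,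
    Matrix.toBlocks_fromBlocks₁₂]
  simp

end

/-- (Proposition 5.4.) Over an infinite field, if `2r ≤ 3n` then one can
choose an invertible `R` of size `r` and two diagonal matrices `D_1, D_2` such that the
top-right `n×(r−n)` blocks `B_1, B_2` of `Z_i = R⁻¹ D_i R` have rank `r−n` and their
images are in direct sum. Size-`r` matrices are indexed by `Fin n ⊕ Fin (r−n)`. -/
theorem exists_conjugated_diagonals_topRight_directSum
    (K : Type*) [Field K] [Infinite K] (n r : ℕ) (hnr : n ≤ r) (hr : 2 * r ≤ 3 * n) :
    ∃ (R : (Matrix (Fin n ⊕ Fin (r - n)) (Fin n ⊕ Fin (r - n)) K)ˣ)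
      (d₁ d₂ : Fin n ⊕ Fin (r - n) → K),
      (((R⁻¹).val * Matrix.diagonal d₁ * R.val :
          Matrix (Fin n ⊕ Fin (r - n)) (Fin n ⊕ Fin (r - n)) K).toBlocks₁₂).rank = r - n ∧
      (((R⁻¹).val * Matrix.diagonal d₂ * R.val :
          Matrix (Fin n ⊕ Fin (r - n)) (Fin n ⊕ Fin (r - n)) K).toBlocks₁₂).rank = r - n ∧
      LinearMap.range (((R⁻¹).val * Matrix.diagonal d₁ * R.val :
          Matrix (Fin n ⊕ Fin (r - n)) (Fin n ⊕ Fin (r - n)) K).toBlocks₁₂).mulVecLin ⊓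
        LinearMap.range (((R⁻¹).val * Matrix.diagonal d₂ * R.val :
          Matrix (Fin n ⊕ Fin (r - n)) (Fin n ⊕ Fin (r - n)) K).toBlocks₁₂).mulVecLin = ⊥ := by
  have hm : 2 * (r - n) ≤ n := by omega
  let f : Fin (r - n) → Fin n := fun j => ⟨j, by omega⟩
  let g : Fin (r - n) → Fin n := fun j => ⟨(r - n) + j, by omega⟩
  have hf : Function.Injective f := fun a b h => by
    simpa [f, Fin.ext_iff] using h
  have hg : Function.Injective g := fun a b h => by
    simpa [g, Fin.ext_iff] using h
  have hfg : ∀ j k, f j ≠ g k := fun j k h => by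
    simp only [f, g, Fin.mk.injEq] at h
    omega
  refine ⟨unipotentUnit (funMatrix K f + funMatrix K g),
    Sum.elim ((Set.range f).indicator 1) 0, Sum.elim ((Set.range g).indicator 1) 0, ?_⟩
  have h₁ := diagonal_mul_funMatrix_add (K := K) hfg
  have h₂ := diagonal_mul_funMatrix_add (K := K) fun j k => (hfg k j).symm
  rw [add_comm] at h₂
  rw [toBlocks₁₂_conj_unipotentUnit, toBlocks₁₂_conj_unipotentUnit, h₁, h₂]
  exact ⟨rank_funMatrix hf, rank_funMatrix hg, range_funMatrix_inf hfg⟩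
end

section
/- Let K be an infinite field and n ≤ r with 2r ≤ 3n. Then there exist an invertible matrix R ∈ GL_r(K) and two diagonal r×r matrices D_1, D_2 over K such that, writing A_i for the top-left n×n block of Z_i = R^{-1} D_i R (i = 1,2), one has dim Im [A_1,A_2] = 2(r−n). -/
open Matrix

/-!
Put `k = r - n`, so that `n ≥ 2k`. It suffices to treat `n = 2`, `k = 1`: the general case is a
direct sum of `k` copies of that one and of `n - 2k` trivial `1 × 1` blocks, on which both diagonal
matrices vanish. For `n = 2`, `k = 1` take
`R = !![1, 0, 1; 0, 1, 1; 1, 1, 1]`, with inverse `!![0, -1, 1; -1, 0, 1; 1, 1, -1]`, and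
`D₁ = diag(1, 0, 0)`, `D₂ = diag(0, 1, 0)`. Then `A₁ = !![0, 0; -1, 0]`, `A₂ = !![0, -1; 0, 0]`
and `[A₁, A₂] = diag(-1, 1)` has rank two. All entries are integers and `det R = -1`, so this
works over every field.

The direct sum is written down with each scalar replaced by a multiple of the `k × k` identity
matrix, on the index type `((κ ⊕ κ) ⊕ μ) ⊕ κ`; the commutator is then the diagonal matrix with
entries `-1`, `1`, `0` on the three summands of `(κ ⊕ κ) ⊕ μ`.
-/

namespace CommutatorRank

variable (K : Type*) [Field K] (κ μ : Type*) [DecidableEq κ] [DecidableEq μ]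

/-- The direct sum of copies, indexed by `κ`, of `!![1, 0, 1; 0, 1, 1; 1, 1, 1]` and of the
identity matrix of index type `μ`. -/
def conj : Matrix (((κ ⊕ κ) ⊕ μ) ⊕ κ) (((κ ⊕ κ) ⊕ μ) ⊕ κ) K :=
  fromBlocks (fromBlocks (fromBlocks 1 0 0 1) 0 0 1) (fromRows (fromRows 1 1) 0)
    (fromCols (fromCols 1 1) 0) 1

/-- The inverse of `conj`: the direct sum of copies, indexed by `κ`, of
`!![0, -1, 1; -1, 0, 1; 1, 1, -1]` and of the identity matrix of index type `μ`. -/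
def conjInv : Matrix (((κ ⊕ κ) ⊕ μ) ⊕ κ) (((κ ⊕ κ) ⊕ μ) ⊕ κ) K :=
  fromBlocks (fromBlocks (fromBlocks 0 (-1) (-1) 0) 0 0 1) (fromRows (fromRows 1 1) 0)
    (fromCols (fromCols 1 1) 0) (-1)

/-- The diagonal of `D₁`: the indicator of the first summand `κ`. -/
def diag₁ : ((κ ⊕ κ) ⊕ μ) ⊕ κ → K := Sum.elim (Sum.elim (Sum.elim 1 0) 0) 0

/-- The diagonal of `D₂`: the indicator of the second summand `κ`. -/
def diag₂ : ((κ ⊕ κ) ⊕ μ) ⊕ κ → K := Sum.elim (Sum.elim (Sum.elim 0 1) 0) 0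

variable [Fintype κ] [Fintype μ]

lemma conj_mul_conjInv : conj K κ μ * conjInv K κ μ = 1 := by
  ext (((i | i) | i) | i) (((j | j) | j) | j) <;>
    simp [conj, conjInv, mul_apply, Fintype.sum_sum_type, one_apply]

lemma conjInv_mul_conj : conjInv K κ μ * conj K κ μ = 1 :=
  mul_eq_one_comm.mp (conj_mul_conjInv K κ μ)

lemma block₁ : (conjInv K κ μ * diagonal (diag₁ K κ μ) * conj K κ μ).toBlocks₁₁ =
    fromBlocks (fromBlocks 0 0 (-1) 0) 0 0 0 := by
  ext ((i | i) | i) ((j | j) | j) <;>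
    simp [conj, conjInv, diag₁, toBlocks₁₁, mul_apply, diagonal_apply,
      Fintype.sum_sum_type, one_apply]

lemma block₂ : (conjInv K κ μ * diagonal (diag₂ K κ μ) * conj K κ μ).toBlocks₁₁ =
    fromBlocks (fromBlocks 0 (-1) 0 0) 0 0 0 := by
  ext ((i | i) | i) ((j | j) | j) <;>
    simp [conj, conjInv, diag₂, toBlocks₁₁, mul_apply, diagonal_apply,
      Fintype.sum_sum_type, one_apply]

lemma commutator_eq :
    (fromBlocks (fromBlocks 0 0 (-1) 0) 0 0 0 : Matrix ((κ ⊕ κ) ⊕ μ) ((κ ⊕ κ) ⊕ μ) K) *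
        fromBlocks (fromBlocks 0 (-1) 0 0) 0 0 0 -
      fromBlocks (fromBlocks 0 (-1) 0 0) 0 0 0 * fromBlocks (fromBlocks 0 0 (-1) 0) 0 0 0 =
    diagonal (Sum.elim (Sum.elim (-1) 1) 0) := by
  ext ((i | i) | i) ((j | j) | j) <;>
    simp [fromBlocks_multiply, one_apply, diagonal_apply, neg_ite]

lemma rank_commutator :
    (diagonal (Sum.elim (Sum.elim (-1) 1) 0 : (κ ⊕ κ) ⊕ μ → K)).rank = 2 * Fintype.card κ := by
  classical
  rw [rank_diagonal, Fintype.card_subtype, Finset.card_filter]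
  simp [Fintype.sum_sum_type, two_mul]

end CommutatorRank

open CommutatorRank in
/-- (Theorem 5.5.) Over an infinite field, if `2r ≤ 3n` then one can
choose an invertible `R` of size `r` and two diagonal matrices `D_1, D_2` such that the
top-left `n×n` blocks `A_1, A_2` of `Z_i = R⁻¹ D_i R` satisfy
`dim Im [A_1,A_2] = 2(r−n)`. Size-`r` matrices are indexed by `Fin n ⊕ Fin (r−n)`. -/
theorem exists_conjugated_diagonals_commutator_rank
    (K : Type*) [Field K] [Infinite K] (n r : ℕ) (hnr : n ≤ r) (hr : 2 * r ≤ 3 * n) :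
    ∃ (R : (Matrix (Fin n ⊕ Fin (r - n)) (Fin n ⊕ Fin (r - n)) K)ˣ)
      (d₁ d₂ : Fin n ⊕ Fin (r - n) → K),
      Module.finrank K
        ↥(LinearMap.range
          (((R⁻¹).val * Matrix.diagonal d₁ * R.val).toBlocks₁₁ *
              ((R⁻¹).val * Matrix.diagonal d₂ * R.val).toBlocks₁₁ -
            ((R⁻¹).val * Matrix.diagonal d₂ * R.val).toBlocks₁₁ *
              ((R⁻¹).val * Matrix.diagonal d₁ * R.val).toBlocks₁₁).mulVecLin) =
        2 * (r - n) := by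
  obtain ⟨e⟩ : Nonempty
      (Fin n ≃ (Fin (r - n) ⊕ Fin (r - n)) ⊕ Fin (n - 2 * (r - n))) :=
    ⟨Fintype.equivOfCardEq (by simp only [Fintype.card_sum, Fintype.card_fin]; omega)⟩
  let f := e.sumCongr (Equiv.refl (Fin (r - n)))
  set P := conjInv K (Fin (r - n)) (Fin (n - 2 * (r - n))) with hP
  set Q := conj K (Fin (r - n)) (Fin (n - 2 * (r - n))) with hQ
  -- Reindexing along `f` commutes with forming the top-left block.
  have key (d) : (P.submatrix f f * diagonal (d ∘ f) * Q.submatrix f f).toBlocks₁₁ =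
      (P * diagonal d * Q).toBlocks₁₁.submatrix e e := by
    rw [← submatrix_diagonal_equiv d f, submatrix_mul_equiv, submatrix_mul_equiv]
    rfl
  have hsub (A B : Matrix ((Fin (r - n) ⊕ Fin (r - n)) ⊕ Fin (n - 2 * (r - n)))
      ((Fin (r - n) ⊕ Fin (r - n)) ⊕ Fin (n - 2 * (r - n))) K) :
      A.submatrix e e - B.submatrix e e = (A - B).submatrix e e := rfl
  refine ⟨⟨Q.submatrix f f, P.submatrix f f, ?_, ?_⟩, diag₁ K _ _ ∘ f, diag₂ K _ _ ∘ f, ?_⟩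
  · rw [submatrix_mul_equiv, conj_mul_conjInv, submatrix_one_equiv]
  · rw [submatrix_mul_equiv, conjInv_mul_conj, submatrix_one_equiv]
  · -- `Matrix.rank` is by definition the dimension of the range of `mulVecLin`.
    change (_ - _ : Matrix (Fin n) (Fin n) K).rank = _
    simp only [Units.inv_mk, key]
    rw [hP, hQ, block₁, block₂, submatrix_mul_equiv, submatrix_mul_equiv,
      hsub, commutator_eq, rank_submatrix, rank_commutator, Fintype.card_fin]
end

section
/- Let K be an infinite field and n ≤ r with 3r ≤ 4n. Then there exist an invertible matrix R ∈ GL_r(K) and three diagonal r×r matrices D_1, D_2, D_3 over K such that, writing A_i for the top-left n×n block of Z_i = R^{-1} D_i R (i = 1,2,3), one has dim (Im [A_1,A_2] + Im [A_1,A_3]) = 3(r−n). -/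
/-!
Put `s = r - n`, so that `3s ≤ n`, and choose three disjoint families of `s` coordinates of `Kⁿ`.
Let `F₁, F₂, F₃` be the corresponding `n × s` coordinate inclusions, so `Fₐᵀ F_b = δ_{ab}`, and let
`W = F₁ + F₂ + F₃`. Take
`R = [[1, W], [0, 1]] * [[1, 0], [-Wᵀ, 1]]` and `Dₐ = [[Fₐ Fₐᵀ, 0], [0, 0]]`, which is diagonal.
The top-left block of `R⁻¹ Dₐ R` is `Fₐ Fₐᵀ (1 - W Wᵀ)` (`toBlocks₁₁_conj_blockUnit`), which equals
`-Fₐ (W - Fₐ)ᵀ` because `Fₐᵀ W = 1`. Hence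
`[A₁, A₂] = F₁ (F₁ + F₃)ᵀ - F₂ (F₂ + F₃)ᵀ` and `[A₁, A₃] = F₁ (F₁ + F₂)ᵀ - F₃ (F₂ + F₃)ᵀ`.
Both ranges lie in `Im F₁ + Im F₂ + Im F₃`. Conversely `[A₁, A₂] F₁ = F₁`, `[A₁, A₂] F₂ = -F₂` and
`[A₁, A₃] F₃ = -F₃`, so the sum of the two ranges is the `3s`-dimensional space
`Im F₁ ⊕ Im F₂ ⊕ Im F₃` (`sup_range_commutators`, `finrank_sup_range_of_orthonormal`).
-/

open Matrix

section

set_option linter.unusedSectionVars false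

variable {K N S : Type*} [Field K] [Fintype N] [DecidableEq N] [Fintype S] [DecidableEq S]

/-- The invertible matrix `[[1, W], [0, 1]] * [[1, 0], [-Wᵀ, 1]]`. -/
def blockUnit (W : Matrix N S K) : (Matrix (N ⊕ S) (N ⊕ S) K)ˣ where
  val := fromBlocks 1 W 0 1 * fromBlocks 1 0 (-Wᵀ) 1
  inv := fromBlocks 1 0 Wᵀ 1 * fromBlocks 1 (-W) 0 1
  val_inv := by
    simp [fromBlocks_multiply, Matrix.add_mul, Matrix.mul_add, Matrix.mul_assoc]
    rw [← fromBlocks_one]; congr 1; abel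
  inv_val := by
    simp [fromBlocks_multiply, Matrix.add_mul, Matrix.mul_add, Matrix.mul_assoc]
    rw [← fromBlocks_one]; congr 1; abel

lemma toBlocks₁₁_conj_blockUnit (W : Matrix N S K) (δ : N → K) :
    ((blockUnit W)⁻¹.val * diagonal (Sum.elim δ 0) * (blockUnit W).val).toBlocks₁₁ =
      diagonal δ * (1 - W * Wᵀ) := by
  have h : (diagonal (Sum.elim δ 0) : Matrix (N ⊕ S) (N ⊕ S) K) =
      fromBlocks (diagonal δ) 0 0 0 := by
    rw [← diagonal_zero, fromBlocks_diagonal]; rfl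
  rw [h, Units.inv_mk]
  simp [blockUnit, fromBlocks_multiply, sub_eq_add_neg]

/-- The matrix of the coordinate inclusion `Kˢ → Kᴺ` sending `e_j` to `e_{f j}`. -/
def coordIncl (K : Type*) [Field K] (f : S → N) : Matrix N S K :=
  (1 : Matrix N N K).submatrix id f

lemma coordIncl_transpose_mul_self {f : S → N} (hf : f.Injective) :
    (coordIncl K f)ᵀ * coordIncl K f = 1 := by
  ext i j
  simp [coordIncl, mul_apply, one_apply, hf.eq_iff, eq_comm]

lemma coordIncl_transpose_mul_of_disjoint {f g : S → N} (h : ∀ i j, f i ≠ g j) :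
    (coordIncl K f)ᵀ * coordIncl K g = 0 := by
  ext i j
  simp [coordIncl, mul_apply, one_apply, h i j]

lemma exists_diagonal_eq_coordIncl_mul_transpose (f : S → N) :
    ∃ δ : N → K, diagonal δ = coordIncl K f * (coordIncl K f)ᵀ := by
  refine ⟨fun i => ∑ j, if i = f j then 1 else 0, ?_⟩
  ext i i'
  simp only [coordIncl, mul_apply, diagonal_apply, transpose_apply, submatrix_apply, id,
    one_apply]
  split_ifs with h
  · subst h; exact Finset.sum_congr rfl fun j _ => by split_ifs <;> simp
  · symm
    refine Finset.sum_eq_zero fun j _ => ?_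
    by_cases h1 : i = f j
    · have : i' ≠ f j := fun h2 => h (h1.trans h2.symm)
      simp [this]
    · simp [h1]

lemma range_mulVecLin_mul_le {M : Type*} [Fintype M] (A : Matrix N S K) (B : Matrix S M K) :
    LinearMap.range (A * B).mulVecLin ≤ LinearMap.range A.mulVecLin := by
  rw [mulVecLin_mul]; exact LinearMap.range_comp_le_range _ _

/-- Three matrices with jointly orthonormal columns have ranges in direct sum, each of
dimension `|S|`. -/
lemma finrank_sup_range_of_orthonormal {F₁ F₂ F₃ : Matrix N S K}
    (h11 : F₁ᵀ * F₁ = 1) (h22 : F₂ᵀ * F₂ = 1) (h33 : F₃ᵀ * F₃ = 1)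
    (h12 : F₁ᵀ * F₂ = 0) (h13 : F₁ᵀ * F₃ = 0) (h21 : F₂ᵀ * F₁ = 0)
    (h23 : F₂ᵀ * F₃ = 0) (h31 : F₃ᵀ * F₁ = 0) (h32 : F₃ᵀ * F₂ = 0) :
    Module.finrank K ↥(LinearMap.range F₁.mulVecLin ⊔
      (LinearMap.range F₂.mulVecLin ⊔ LinearMap.range F₃.mulVecLin)) = 3 * Fintype.card S := by
  rw [← LinearMap.range_coprod, ← LinearMap.range_coprod, LinearMap.finrank_range_of_inj]
  · simp; ring
  · rw [injective_iff_map_eq_zero]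
    rintro ⟨x, y, z⟩ h
    simp only [LinearMap.coprod_apply, mulVecLin_apply] at h
    have e1 := congrArg (F₁ᵀ *ᵥ ·) h
    have e2 := congrArg (F₂ᵀ *ᵥ ·) h
    have e3 := congrArg (F₃ᵀ *ᵥ ·) h
    simp only [mulVec_add, mulVec_mulVec, h11, h12, h13, h21, h22, h23, h31, h32, h33,
      one_mulVec, zero_mulVec, mulVec_zero, add_zero, zero_add] at e1 e2 e3
    simp [e1, e2, e3]

/-- For `Aₐ = Fₐ Fₐᵀ (1 - W Wᵀ)` with `W = F₁ + F₂ + F₃` and jointly orthonormal columns, the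
ranges of `[A₁, A₂]` and `[A₁, A₃]` together span the ranges of the three `Fₐ`. -/
lemma sup_range_commutators {F₁ F₂ F₃ W A₁ A₂ A₃} (hW : W = F₁ + F₂ + F₃)
    (hA₁ : A₁ = F₁ * F₁ᵀ * (1 - W * Wᵀ)) (hA₂ : A₂ = F₂ * F₂ᵀ * (1 - W * Wᵀ))
    (hA₃ : A₃ = F₃ * F₃ᵀ * (1 - W * Wᵀ))
    (h11 : F₁ᵀ * F₁ = 1) (h22 : F₂ᵀ * F₂ = 1) (h33 : F₃ᵀ * F₃ = 1)
    (h12 : F₁ᵀ * F₂ = 0) (h13 : F₁ᵀ * F₃ = 0) (h21 : F₂ᵀ * F₁ = 0)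
    (h23 : F₂ᵀ * F₃ = 0) (h31 : F₃ᵀ * F₁ = 0) (h32 : F₃ᵀ * F₂ = 0) :
    LinearMap.range (A₁ * A₂ - A₂ * A₁ : Matrix N N K).mulVecLin ⊔
        LinearMap.range (A₁ * A₃ - A₃ * A₁ : Matrix N N K).mulVecLin =
      LinearMap.range (F₁ : Matrix N S K).mulVecLin ⊔
        (LinearMap.range F₂.mulVecLin ⊔ LinearMap.range F₃.mulVecLin) := by
  have a1 : A₁ = -(F₁ * (F₂ᵀ + F₃ᵀ)) := by
    have : F₁ᵀ * W = 1 := by simp [hW, Matrix.mul_add, h11, h12, h13]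
    rw [hA₁, mul_sub, mul_one, Matrix.mul_assoc F₁, ← Matrix.mul_assoc F₁ᵀ, this, hW]
    simp only [Matrix.mul_add, transpose_add, Matrix.one_mul]
    abel
  have a2 : A₂ = -(F₂ * (F₁ᵀ + F₃ᵀ)) := by
    have : F₂ᵀ * W = 1 := by simp [hW, Matrix.mul_add, h21, h22, h23]
    rw [hA₂, mul_sub, mul_one, Matrix.mul_assoc F₂, ← Matrix.mul_assoc F₂ᵀ, this, hW]
    simp only [Matrix.mul_add, transpose_add, Matrix.one_mul]
    abel
  have a3 : A₃ = -(F₃ * (F₁ᵀ + F₂ᵀ)) := by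
    have : F₃ᵀ * W = 1 := by simp [hW, Matrix.mul_add, h31, h32, h33]
    rw [hA₃, mul_sub, mul_one, Matrix.mul_assoc F₃, ← Matrix.mul_assoc F₃ᵀ, this, hW]
    simp only [Matrix.mul_add, transpose_add, Matrix.one_mul]
    abel
  have key : ∀ (F G : Matrix N S K) (X Y : Matrix S N K),
      -(F * X) * -(G * Y) = F * (X * G) * Y := by
    intro F G X Y
    simp [Matrix.mul_assoc]
  have c2 : A₁ * A₂ - A₂ * A₁ = F₁ * (F₁ᵀ + F₃ᵀ) - F₂ * (F₂ᵀ + F₃ᵀ) := by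
    rw [a1, a2, key, key]
    simp only [Matrix.add_mul, h22, h32, h11, h31, add_zero, Matrix.mul_one]
  have c3 : A₁ * A₃ - A₃ * A₁ = F₁ * (F₁ᵀ + F₂ᵀ) - F₃ * (F₂ᵀ + F₃ᵀ) := by
    rw [a1, a3, key, key]
    simp only [Matrix.add_mul, h23, h33, h11, h21, add_zero, zero_add, Matrix.mul_one]
  have f1 : F₁ = (A₁ * A₂ - A₂ * A₁) * F₁ := by
    rw [c2]; simp [Matrix.sub_mul, Matrix.mul_assoc, Matrix.add_mul, h11, h21, h31]
  have f2 : F₂ = (A₁ * A₂ - A₂ * A₁) * -F₂ := by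
    rw [c2]; simp [Matrix.sub_mul, Matrix.mul_assoc, Matrix.add_mul, h12, h22, h32]
  have f3 : F₃ = (A₁ * A₃ - A₃ * A₁) * -F₃ := by
    rw [c3]; simp [Matrix.sub_mul, Matrix.mul_assoc, Matrix.add_mul, h13, h23, h33]
  apply le_antisymm
  · rw [c2, c3]
    refine sup_le ?_ ?_ <;> rintro _ ⟨x, rfl⟩ <;>
      simp only [mulVecLin_apply, sub_mulVec, ← mulVec_mulVec]
    · exact sub_mem (Submodule.mem_sup_left ⟨_, rfl⟩)
        (Submodule.mem_sup_right (Submodule.mem_sup_left ⟨_, rfl⟩))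
    · exact sub_mem (Submodule.mem_sup_left ⟨_, rfl⟩)
        (Submodule.mem_sup_right (Submodule.mem_sup_right ⟨_, rfl⟩))
  · refine sup_le ?_ (sup_le ?_ ?_)
    · exact le_sup_of_le_left
        ((congrArg (fun M => LinearMap.range (mulVecLin M)) f1).le.trans
          (range_mulVecLin_mul_le _ _))
    · exact le_sup_of_le_left
        ((congrArg (fun M => LinearMap.range (mulVecLin M)) f2).le.trans
          (range_mulVecLin_mul_le _ _))
    · exact le_sup_of_le_right
        ((congrArg (fun M => LinearMap.range (mulVecLin M)) f3).le.trans
          (range_mulVecLin_mul_le _ _))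

end

/-- (Theorem 5.8.) Over an infinite field, if `3r ≤ 4n` then one can
choose an invertible `R` of size `r` and three diagonal matrices `D_1, D_2, D_3` such
that the top-left `n×n` blocks `A_1, A_2, A_3` of `Z_i = R⁻¹ D_i R` satisfy
`dim (Im [A_1,A_2] + Im [A_1,A_3]) = 3(r−n)`. Size-`r` matrices are indexed by
`Fin n ⊕ Fin (r−n)`. -/
theorem exists_conjugated_diagonals_two_commutators_rank
    (K : Type*) [Field K] [Infinite K] (n r : ℕ) (hnr : n ≤ r) (hr : 3 * r ≤ 4 * n) :
    ∃ (R : (Matrix (Fin n ⊕ Fin (r - n)) (Fin n ⊕ Fin (r - n)) K)ˣ)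
      (d₁ d₂ d₃ : Fin n ⊕ Fin (r - n) → K),
      Module.finrank K
        ↥(LinearMap.range
            (((R⁻¹).val * Matrix.diagonal d₁ * R.val).toBlocks₁₁ *
                ((R⁻¹).val * Matrix.diagonal d₂ * R.val).toBlocks₁₁ -
              ((R⁻¹).val * Matrix.diagonal d₂ * R.val).toBlocks₁₁ *
                ((R⁻¹).val * Matrix.diagonal d₁ * R.val).toBlocks₁₁).mulVecLin ⊔
          LinearMap.range
            (((R⁻¹).val * Matrix.diagonal d₁ * R.val).toBlocks₁₁ *
                ((R⁻¹).val * Matrix.diagonal d₃ * R.val).toBlocks₁₁ -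
              ((R⁻¹).val * Matrix.diagonal d₃ * R.val).toBlocks₁₁ *
                ((R⁻¹).val * Matrix.diagonal d₁ * R.val).toBlocks₁₁).mulVecLin) =
        3 * (r - n) := by
  -- the three disjoint families of coordinates: `j`, `s + j` and `2s + j` for `j < s = r - n`
  let f₁ : Fin (r - n) → Fin n := fun j => ⟨j, by omega⟩
  let f₂ : Fin (r - n) → Fin n := fun j => ⟨(r - n) + j, by omega⟩
  let f₃ : Fin (r - n) → Fin n := fun j => ⟨2 * (r - n) + j, by omega⟩
  have i₁ : f₁.Injective := fun i j h => by simp only [f₁, Fin.mk.injEq] at h; omega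
  have i₂ : f₂.Injective := fun i j h => by simp only [f₂, Fin.mk.injEq] at h; omega
  have i₃ : f₃.Injective := fun i j h => by simp only [f₃, Fin.mk.injEq] at h; omega
  have d12 : ∀ i j, f₁ i ≠ f₂ j := fun i j h => by simp only [f₁, f₂, Fin.mk.injEq] at h; omega
  have d13 : ∀ i j, f₁ i ≠ f₃ j := fun i j h => by simp only [f₁, f₃, Fin.mk.injEq] at h; omega
  have d23 : ∀ i j, f₂ i ≠ f₃ j := fun i j h => by simp only [f₂, f₃, Fin.mk.injEq] at h; omega
  obtain ⟨δ₁, hδ₁⟩ := exists_diagonal_eq_coordIncl_mul_transpose (K := K) f₁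
  obtain ⟨δ₂, hδ₂⟩ := exists_diagonal_eq_coordIncl_mul_transpose (K := K) f₂
  obtain ⟨δ₃, hδ₃⟩ := exists_diagonal_eq_coordIncl_mul_transpose (K := K) f₃
  have h11 := coordIncl_transpose_mul_self (K := K) i₁
  have h22 := coordIncl_transpose_mul_self (K := K) i₂
  have h33 := coordIncl_transpose_mul_self (K := K) i₃
  have h12 := coordIncl_transpose_mul_of_disjoint (K := K) d12
  have h13 := coordIncl_transpose_mul_of_disjoint (K := K) d13
  have h23 := coordIncl_transpose_mul_of_disjoint (K := K) d23
  have h21 := coordIncl_transpose_mul_of_disjoint (K := K) fun i j => (d12 j i).symm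
  have h31 := coordIncl_transpose_mul_of_disjoint (K := K) fun i j => (d13 j i).symm
  have h32 := coordIncl_transpose_mul_of_disjoint (K := K) fun i j => (d23 j i).symm
  refine ⟨blockUnit (coordIncl K f₁ + coordIncl K f₂ + coordIncl K f₃),
    Sum.elim δ₁ 0, Sum.elim δ₂ 0, Sum.elim δ₃ 0, ?_⟩
  rw [sup_range_commutators rfl
      ((toBlocks₁₁_conj_blockUnit _ δ₁).trans (by rw [hδ₁]))
      ((toBlocks₁₁_conj_blockUnit _ δ₂).trans (by rw [hδ₂]))
      ((toBlocks₁₁_conj_blockUnit _ δ₃).trans (by rw [hδ₃]))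
      h11 h22 h33 h12 h13 h21 h23 h31 h32,
    finrank_sup_range_of_orthonormal h11 h22 h33 h12 h13 h21 h23 h31 h32, Fintype.card_fin]
end
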